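/- There exists a sequence of reals t_k with t_k → 0 as k → ∞ such that for every integer k ≥ 3 and every real c with 0 < c < 2^(k-1)·ln 2 − (ln 2)/2 − (1 + t_k)/2, the probability that a random k-uniform hypergraph H_k(n, m) with m = ⌊cn⌋ hyperedges is 2-colorable tends to 1 as n → ∞. -/

import Mathlib

/-- A hypergraph (a set of hyperedges on vertex set `Fin n`) is 2-colorable if the
vertices can be 2-colored so that no hyperedge is monochromatic. -/
def IsTwoColorable {n : ℕ} (H : Finset (Finset (Fin n))) : Prop :=
  ∃ σ : Fin n → Bool, ∀ e ∈ H, (∃ v ∈ e, σ v = true) ∧ (∃ v ∈ e, σ v = false)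

namespace HC
open Finset

noncomputable section

/-- average over a finite type -/
def avg {E : Type} [Fintype E] (f : E → ℝ) : ℝ := (∑ e, f e) / (Fintype.card E : ℝ)

def Ex {E : Type} [Fintype E] (s : ℕ) (f : (Fin s → E) → ℝ) : ℝ :=
  (∑ h, f h) / (Fintype.card E : ℝ) ^ s

section avg
variable {E : Type} [Fintype E]

theorem avg_mono {f g : E → ℝ} (h : ∀ e, f e ≤ g e) : avg f ≤ avg g := by
  unfold avg; gcongr; exact h _

theorem avg_nonneg {f : E → ℝ} (h : ∀ e, 0 ≤ f e) : 0 ≤ avg f :=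
  div_nonneg (Finset.sum_nonneg fun e _ => h e) (Nat.cast_nonneg _)

theorem avg_add (f g : E → ℝ) : avg (fun e => f e + g e) = avg f + avg g := by
  unfold avg; rw [Finset.sum_add_distrib, add_div]

theorem avg_sub (f g : E → ℝ) : avg (fun e => f e - g e) = avg f - avg g := by
  unfold avg; rw [Finset.sum_sub_distrib, sub_div]

theorem avg_mul (c : ℝ) (f : E → ℝ) : avg (fun e => c * f e) = c * avg f := by
  unfold avg; rw [← Finset.mul_sum, mul_div_assoc]

theorem avg_const [Nonempty E] (c : ℝ) : avg (fun _ : E => c) = c := by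
  unfold avg; simp

theorem avg_sum {ι : Type} (S : Finset ι) (f : ι → E → ℝ) :
    avg (fun e => ∑ i ∈ S, f i e) = ∑ i ∈ S, avg (f i) := by
  unfold avg; rw [Finset.sum_comm, Finset.sum_div]

theorem Ex_mono {s : ℕ} {f g : (Fin s → E) → ℝ} (h : ∀ e, f e ≤ g e) : Ex s f ≤ Ex s g := by
  unfold Ex; gcongr with i; exact h i

theorem Ex_add {s : ℕ} (f g : (Fin s → E) → ℝ) : Ex s (fun e => f e + g e) = Ex s f + Ex s g := by
  unfold Ex; rw [Finset.sum_add_distrib, add_div]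

theorem Ex_mul {s : ℕ} (c : ℝ) (f : (Fin s → E) → ℝ) : Ex s (fun e => c * f e) = c * Ex s f := by
  unfold Ex; rw [← Finset.mul_sum, mul_div_assoc]

theorem Ex_const [Nonempty E] {s : ℕ} (c : ℝ) : Ex s (fun _ : Fin s → E => c) = c := by
  unfold Ex; simp

theorem Ex_sum {ι : Type} {s : ℕ} (S : Finset ι) (f : ι → (Fin s → E) → ℝ) :
    Ex s (fun e => ∑ i ∈ S, f i e) = ∑ i ∈ S, Ex s (f i) := by
  unfold Ex; rw [Finset.sum_comm, Finset.sum_div]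

theorem Ex_prod {s : ℕ} (f : E → ℝ) : Ex s (fun h => ∏ i, f (h i)) = avg f ^ s := by
  unfold Ex avg; rw [div_pow, Fintype.sum_pow]

theorem Ex_succ (s : ℕ) (f : (Fin (s + 1) → E) → ℝ) :
    Ex (s + 1) f = Ex s (fun h => avg (fun e => f (Fin.snoc h e))) := by
  unfold Ex avg
  have : ∑ h, f h = ∑ h : Fin s → E, ∑ e, f (Fin.snoc h e) := by
    rw [← Fintype.sum_equiv (Fin.snocEquiv (fun _ : Fin (s+1) => E)) (fun x => f (Fin.snoc x.2 x.1)) f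
      (fun x => rfl), Fintype.sum_prod_type, Finset.sum_comm]
  rw [this, ← Finset.sum_div, div_div, pow_succ, mul_comm]

end avg

section chain
open Classical
variable {B E : Type}

def act (ok : B → E → Prop) (S : Finset B) (e : E) : Finset B := S.filter (fun σ => ok σ e)

def sol (ok : B → E → Prop) (B0 : Finset B) {s : ℕ} (h : Fin s → E) : Finset B :=
  B0.filter (fun σ => ∀ i, ok σ (h i))

def heavy (L : B → B → Prop) (S : Finset B) : ℝ :=
  (((S ×ˢ S).filter (fun x => ¬ L x.1 x.2)).card : ℝ)

theorem sol_snoc (ok : B → E → Prop) (B0 : Finset B) {s : ℕ} (h : Fin s → E) (e : E) :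
    sol ok B0 (Fin.snoc h e : Fin (s+1) → E) = act ok (sol ok B0 h) e := by
  ext σ
  simp only [sol, act, Finset.mem_filter, and_assoc]
  refine and_congr_right fun _ => ?_
  rw [Fin.forall_fin_succ']
  simp

def Msz (b p : ℝ) (s : ℕ) (S : Finset B) : ℝ := (S.card : ℝ) / (b * p ^ s)

def good (L : B → B → Prop) (b p τ μ : ℝ) (s : ℕ) (S : Finset B) : Prop :=
  heavy L S ≤ τ * (b * p ^ s) ^ 2 ∧ μ ≤ Msz b p s S

def AA (ok : B → E → Prop) (B0 : Finset B) (L : B → B → Prop) (b p τ μ : ℝ) :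
    (s : ℕ) → (Fin s → E) → Prop
  | 0, _ => True
  | s + 1, h => AA ok B0 L b p τ μ s (Fin.init h) ∧ good L b p τ μ s (sol ok B0 (Fin.init h)) ∧
      p / 10 * ((sol ok B0 (Fin.init h)).card : ℝ) ≤ ((sol ok B0 h).card : ℝ)

theorem chain_main [Fintype E] [Nonempty E] (ok : B → E → Prop) (B0 : Finset B) (L : B → B → Prop)
    (hB : B0.Nonempty) (p τ μ V β δ : ℝ) (hp : 0 < p) (hτ : 0 < τ) (hμ : 0 < μ) (hV : 0 ≤ V) (hβ : 0 ≤ β)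
    (h0 : ∀ σ ∈ B0, avg (fun e => if ok σ e then (1:ℝ) else 0) = p)
    (h1 : ∀ S ⊆ B0, S.Nonempty → heavy L S ≤ τ / μ ^ 2 * (S.card : ℝ) ^ 2 →
      avg (fun e => (((act ok S e).card : ℝ) / (p * S.card) - 1) ^ 2) ≤ V)
    (h2 : ∀ S ⊆ B0, S.Nonempty → heavy L S ≤ τ / μ ^ 2 * (S.card : ℝ) ^ 2 →
      avg (fun e => if ((act ok S e).card : ℝ) < p / 10 * S.card then (1:ℝ) else 0) ≤ β)
    (m : ℕ)
    (h3 : ∀ s < m, Ex s (fun h : Fin s → E => heavy L (sol ok B0 h)) ≤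
      δ * ((B0.card : ℝ) * p ^ s) ^ 2) :
    Ex m (fun h : Fin m → E => if sol ok B0 h = ∅ then (1:ℝ) else 0) ≤
      m * (δ / τ + μ * (1 + 10 * V) ^ m + β) := by
  set b : ℝ := (B0.card : ℝ) with hb
  have hbpos : 0 < b := by rw [hb]; exact_mod_cast hB.card_pos
  have hbp : ∀ s, 0 < b * p ^ s := fun s => by positivity
  let A := AA ok B0 L b p τ μ
  have hsub : ∀ (s : ℕ) (h : Fin s → E), sol ok B0 h ⊆ B0 := fun s h => Finset.filter_subset _ _
  -- good implies hypotheses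
  have hgood : ∀ (s : ℕ) (S : Finset B), good L b p τ μ s S →
      S.Nonempty ∧ heavy L S ≤ τ / μ ^ 2 * (S.card : ℝ) ^ 2 := by
    rintro s S ⟨g1, g2⟩
    unfold Msz at g2
    rw [le_div_iff₀ (hbp s)] at g2
    have hc : (0:ℝ) < S.card := lt_of_lt_of_le (by have := hbp s; positivity) g2
    refine ⟨Finset.card_pos.mp (by exact_mod_cast hc), g1.trans ?_⟩
    rw [div_mul_eq_mul_div, le_div_iff₀ (by positivity), mul_assoc]
    have := hbp s
    have : (μ * (b * p ^ s)) ^ 2 ≤ (S.card : ℝ) ^ 2 := by gcongr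
    nlinarith
  have hAsucc : ∀ (s : ℕ) (h : Fin s → E) (e : E), A (s+1) (Fin.snoc h e : Fin (s+1) → E) ↔
      A s h ∧ good L b p τ μ s (sol ok B0 h) ∧
      p / 10 * ((sol ok B0 h).card : ℝ) ≤ ((act ok (sol ok B0 h) e).card : ℝ) := by
    intro s h e
    simp only [A, AA, Fin.init_snoc, sol_snoc]
  -- mean
  have hmean : ∀ S ⊆ B0, S.Nonempty →
      avg (fun e => ((act ok S e).card : ℝ) / (p * S.card) - 1) = 0 := by
    intro S hS hne
    have hc : (0:ℝ) < S.card := by exact_mod_cast hne.card_pos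
    rw [avg_sub, avg_const]
    have : (fun e => ((act ok S e).card : ℝ) / (p * S.card)) =
        fun e => (1 / (p * S.card)) * ∑ σ ∈ S, (if ok σ e then (1:ℝ) else 0) := by
      funext e
      rw [act, Finset.card_filter]; push_cast; ring
    rw [this, avg_mul, avg_sum, Finset.sum_congr rfl (fun σ hσ => h0 σ (hS hσ))]
    simp; field_simp; simp
  -- inverse moment
  have hinv : ∀ s : ℕ, Ex s (fun h => if A s h then (Msz b p s (sol ok B0 h))⁻¹ else 0) ≤
      (1 + 10 * V) ^ s := by
    intro s
    induction s with
    | zero =>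
      have : ∀ h : Fin 0 → E, sol ok B0 h = B0 := by
        intro h; ext σ; simp [sol]
      simp only [this, Msz]
      have : ∀ h : Fin 0 → E, A 0 h := fun h => trivial
      simp only [this, if_true, Ex_const]
      simp [← hb, hbpos.ne']
    | succ s ih =>
      rw [Ex_succ, pow_succ, mul_comm]
      calc _ ≤ Ex s (fun h => (1 + 10 * V) *
            (if A s h then (Msz b p s (sol ok B0 h))⁻¹ else 0)) := ?_
        _ ≤ _ := by rw [Ex_mul]; gcongr
      apply Ex_mono
      intro h
      simp only [hAsucc, sol_snoc]
      by_cases hA : A s h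
      swap
      · simp [hA, avg_const]
      by_cases hg : good L b p τ μ s (sol ok B0 h)
      swap
      · simp only [hA, hg, false_and, and_false, if_false, avg_const, if_true]
        have : 0 ≤ Msz b p s (sol ok B0 h) := by unfold Msz; have := hbp s; positivity
        positivity
      obtain ⟨hne, hhv⟩ := hgood s _ hg
      simp only [hA, hg, true_and, if_true]
      set S := sol ok B0 h with hS
      have hc : (0:ℝ) < S.card := by exact_mod_cast hne.card_pos
      have hMpos : 0 < Msz b p s S := by unfold Msz; have := hbp s; positivity
      have key : ∀ e, (if p / 10 * (S.card:ℝ) ≤ ((act ok S e).card : ℝ) then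
          (Msz b p (s+1) (act ok S e))⁻¹ else 0) ≤ (Msz b p s S)⁻¹ *
          ((1 - (((act ok S e).card : ℝ) / (p * S.card) - 1)) +
            10 * (((act ok S e).card : ℝ) / (p * S.card) - 1) ^ 2) := by
        intro e
        set x := ((act ok S e).card : ℝ) / (p * S.card) with hx
        have hM : Msz b p (s+1) (act ok S e) = Msz b p s S * x := by
          rw [hx]; unfold Msz; rw [pow_succ]; field_simp
        split_ifs with hj
        · have hx10 : 1 / 10 ≤ x := by
            rw [hx, le_div_iff₀ (by positivity)]; linarith
          rw [hM, mul_inv]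
          gcongr
          rw [inv_le_iff_one_le_mul₀ (by linarith)]
          nlinarith [mul_nonneg (sq_nonneg (x-1)) (by linarith : 0 ≤ 10 * x - 1)]
        · have : 0 ≤ (1 - (x-1)) + 10 * (x-1)^2 := by nlinarith [sq_nonneg (x - 1 - 1/20)]
          positivity
      refine (avg_mono key).trans ?_
      rw [avg_mul, avg_add, avg_sub, avg_const, hmean S (hsub s h) hne, avg_mul, mul_comm]
      have := h1 S (hsub s h) hne hhv
      refine mul_le_mul_of_nonneg_right ?_ (by positivity)
      linarith
  have hAne : ∀ (s : ℕ) (h : Fin s → E), A s h → (sol ok B0 h).Nonempty := by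
    intro s h hA
    cases s with
    | zero =>
      have : sol ok B0 h = B0 := by ext σ; simp [sol]
      rwa [this]
    | succ s =>
      obtain ⟨_, hg, hj⟩ := hA
      obtain ⟨hne, -⟩ := hgood s _ hg
      have hc : (0:ℝ) < (sol ok B0 (Fin.init h)).card := by exact_mod_cast hne.card_pos
      have : (0:ℝ) < (sol ok B0 h).card := lt_of_lt_of_le (by positivity) hj
      exact Finset.card_pos.mp (by exact_mod_cast this)
  -- failure
  have hfail : ∀ s ≤ m, 1 - Ex s (fun h => if A s h then (1:ℝ) else 0) ≤
      s * (δ / τ + μ * (1 + 10 * V) ^ m + β) := by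
    intro s hs
    induction s with
    | zero =>
      have : ∀ h : Fin 0 → E, A 0 h := fun h => trivial
      simp only [this, if_true, Ex_const]; simp
    | succ s ih =>
      have ih' := ih (by omega)
      have step : Ex s (fun h => if A s h then (1:ℝ) else 0) ≤
          Ex (s+1) (fun h => if A (s+1) h then (1:ℝ) else 0) + (δ / τ + μ * (1 + 10 * V) ^ m + β) := by
        rw [Ex_succ]
        have hpt : ∀ h : Fin s → E, (if A s h then (1:ℝ) else 0) ≤
            avg (fun e => if A (s+1) (Fin.snoc h e : Fin (s+1) → E) then (1:ℝ) else 0) +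
            ((1 / (τ * (b * p ^ s) ^ 2)) * heavy L (sol ok B0 h) +
              μ * (if A s h then (Msz b p s (sol ok B0 h))⁻¹ else 0) + β) := by
          intro h
          have hh : 0 ≤ heavy L (sol ok B0 h) := Nat.cast_nonneg _
          have hM0 : 0 ≤ Msz b p s (sol ok B0 h) := by unfold Msz; have := hbp s; positivity
          have hav : 0 ≤ avg (fun e => if A (s+1) (Fin.snoc h e : Fin (s+1) → E) then (1:ℝ) else 0) :=
            avg_nonneg (fun e => by split_ifs <;> norm_num)
          have hbps := hbp s
          have t1 : 0 ≤ (1 / (τ * (b * p ^ s) ^ 2)) * heavy L (sol ok B0 h) := by positivity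
          by_cases hA : A s h
          swap
          · simp only [hA, if_false]; linarith
          simp only [hA, if_true]
          have t2 : 0 ≤ μ * (Msz b p s (sol ok B0 h))⁻¹ := by positivity
          by_cases hg1 : heavy L (sol ok B0 h) ≤ τ * (b * p ^ s) ^ 2
          swap
          · have : 1 ≤ (1 / (τ * (b * p ^ s) ^ 2)) * heavy L (sol ok B0 h) := by
              rw [one_div, inv_mul_eq_div, one_le_div (by positivity)]
              linarith
            linarith
          by_cases hg2 : μ ≤ Msz b p s (sol ok B0 h)
          swap
          · have hc : (0:ℝ) < (sol ok B0 h).card := by exact_mod_cast (hAne s h hA).card_pos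
            have hMp : 0 < Msz b p s (sol ok B0 h) := by unfold Msz; positivity
            have : 1 ≤ μ * (Msz b p s (sol ok B0 h))⁻¹ := by
              rw [← div_eq_mul_inv, one_le_div hMp]; linarith
            linarith
          have hg : good L b p τ μ s (sol ok B0 h) := ⟨hg1, hg2⟩
          obtain ⟨hne, hhv⟩ := hgood s _ hg
          have := h2 _ (hsub s h) hne hhv
          have e1 : avg (fun e => if A (s+1) (Fin.snoc h e : Fin (s+1) → E) then (1:ℝ) else 0) +
            avg (fun e => if ((act ok (sol ok B0 h) e).card : ℝ) < p / 10 * (sol ok B0 h).card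
              then (1:ℝ) else 0) = 1 := by
            rw [← avg_add]
            refine Eq.trans ?_ (avg_const (E := E) 1)
            congr 1
            funext e
            simp only [hAsucc, hA, hg, true_and]
            by_cases hj : p / 10 * ((sol ok B0 h).card : ℝ) ≤ ((act ok (sol ok B0 h) e).card : ℝ)
            · rw [if_pos hj, if_neg (not_lt.mpr hj)]; simp
            · rw [if_neg hj, if_pos (not_le.mp hj)]; simp
          linarith
        refine (Ex_mono hpt).trans ?_
        rw [Ex_add, Ex_add, Ex_add, Ex_mul, Ex_mul, Ex_const]
        have hbps := hbp s
        have q1 : 1 / (τ * (b * p ^ s) ^ 2) * Ex s (fun h : Fin s → E => heavy L (sol ok B0 h)) ≤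
            δ / τ := by
          calc _ ≤ 1 / (τ * (b * p ^ s) ^ 2) * (δ * (b * p ^ s) ^ 2) := by
                gcongr; exact h3 s (by omega)
            _ = δ / τ := by field_simp
        have q2 : μ * Ex s (fun h => if A s h then (Msz b p s (sol ok B0 h))⁻¹ else 0) ≤
            μ * (1 + 10 * V) ^ m := by
          gcongr
          refine (hinv s).trans ?_
          apply pow_le_pow_right₀ (by linarith) (by omega)
        linarith
      push_cast
      linarith
  have hfin : Ex m (fun h : Fin m → E => if sol ok B0 h = ∅ then (1:ℝ) else 0) +
      Ex m (fun h => if A m h then (1:ℝ) else 0) ≤ 1 := by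
    rw [← Ex_add]
    refine le_trans ?_ (Ex_const (E := E) (s := m) 1).le
    apply Ex_mono
    intro h
    by_cases hA : A m h
    · have := (hAne m h hA).ne_empty
      simp [hA, this]
    · simp only [hA, if_false, add_zero]; split_ifs <;> norm_num
  have := hfail m le_rfl
  linarith
end chain
end
end HC

namespace HC
open Finset

noncomputable section
section conc
open Classical

def sg (b : Bool) : ℝ := if b then 1 else -1

theorem sg_sq (b : Bool) : sg b * sg b = 1 := by cases b <;> simp [sg]

def okc {N k : ℕ} (σ : Fin N → Bool) (e : Fin k → Fin N) : Prop :=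
  (∃ i, σ (e i) = true) ∧ (∃ i, σ (e i) = false)

def Bal (N : ℕ) : Finset (Fin N → Bool) := univ.filter (fun σ => ∑ v, sg (σ v) = 0)

def rho {N : ℕ} (σ τ : Fin N → Bool) : ℝ := avg (fun v => sg (σ v) * sg (τ v))

def qq (k : ℕ) : ℝ := 2 * (1 / 2) ^ k

def GG (k : ℕ) (x : ℝ) : ℝ := 2 * ((1 + x) / 4) ^ k + 2 * ((1 - x) / 4) ^ k

/-- normalised pair function -/
def FF (k : ℕ) (x : ℝ) : ℝ := (1 - 2 * qq k + GG k x) / (1 - qq k) ^ 2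

variable {N k : ℕ}

theorem avg_prodfun (g : Fin N → ℝ) : avg (fun e : Fin k → Fin N => ∏ i, g (e i)) = avg g ^ k := by
  rw [← Ex_prod]; unfold avg Ex; simp

def aeI (σ : Fin N → Bool) (e : Fin k → Fin N) : ℝ :=
  ∏ i, ((1 + sg (σ (e i))) / 2) + ∏ i, ((1 - sg (σ (e i))) / 2)

theorem ok_ind (hk : 0 < k) (σ : Fin N → Bool) (e : Fin k → Fin N) :
    (if okc σ e then (1:ℝ) else 0) = 1 - aeI σ e := by
  unfold aeI okc
  by_cases h1 : ∃ i, σ (e i) = true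
  · obtain ⟨i, hi⟩ := h1
    have z : ∏ i, ((1 - sg (σ (e i))) / 2) = 0 :=
      Finset.prod_eq_zero (Finset.mem_univ i) (by simp [hi, sg])
    rw [z]
    by_cases h2 : ∃ i, σ (e i) = false
    · obtain ⟨j, hj⟩ := h2
      have z : ∏ i, ((1 + sg (σ (e i))) / 2) = 0 :=
        Finset.prod_eq_zero (Finset.mem_univ j) (by simp [hj, sg])
      rw [z, if_pos ⟨⟨i, hi⟩, ⟨j, hj⟩⟩]; simp
    · rw [if_neg (fun h => h2 h.2)]
      push Not at h2
      have : ∏ i, ((1 + sg (σ (e i))) / 2) = 1 := by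
        apply Finset.prod_eq_one
        intro j _
        have := h2 j
        simp at this
        rw [this]; norm_num [sg]
      rw [this]; simp
  · rw [if_neg (fun h => h1 h.1)]
    push Not at h1
    have w : ∏ i, ((1 - sg (σ (e i))) / 2) = 1 := by
      apply Finset.prod_eq_one
      intro j _
      have := h1 j
      simp at this
      rw [this]; norm_num [sg]
    have z : ∏ i, ((1 + sg (σ (e i))) / 2) = 0 :=
        Finset.prod_eq_zero (Finset.mem_univ ⟨0, hk⟩) (by have := h1 ⟨0, hk⟩; simp at this; simp [this, sg])
    rw [w, z]; simp

theorem avg_sg (σ : Fin N → Bool) (h : σ ∈ Bal N) : avg (fun v => sg (σ v)) = 0 := by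
  simp only [Bal, Finset.mem_filter] at h
  unfold avg; rw [h.2]; simp

theorem avg_ae (hN : 0 < N) (σ : Fin N → Bool) (h : σ ∈ Bal N) :
    avg (fun e : Fin k → Fin N => aeI σ e) = qq k := by
  have : Nonempty (Fin N) := ⟨⟨0, hN⟩⟩
  unfold aeI
  rw [avg_add, avg_prodfun (fun v => (1 + sg (σ v)) / 2), avg_prodfun (fun v => (1 - sg (σ v)) / 2)]
  have e1 : avg (fun v => (1 + sg (σ v)) / 2) = 1 / 2 := by
    have : (fun v => (1 + sg (σ v)) / 2) = fun v => (1/2:ℝ) + (1/2) * sg (σ v) := by funext v; ring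
    rw [this, avg_add, avg_mul, avg_const, avg_sg σ h]; ring
  have e2 : avg (fun v => (1 - sg (σ v)) / 2) = 1 / 2 := by
    have : (fun v => (1 - sg (σ v)) / 2) = fun v => (1/2:ℝ) + (-1/2) * sg (σ v) := by funext v; ring
    rw [this, avg_add, avg_mul, avg_const, avg_sg σ h]; ring
  rw [e1, e2, qq]; ring

theorem avg_ae2 (hN : 0 < N) (σ τ : Fin N → Bool) (h : σ ∈ Bal N) (h' : τ ∈ Bal N) :
    avg (fun e : Fin k → Fin N => aeI σ e * aeI τ e) = GG k (rho σ τ) := by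
  have : Nonempty (Fin N) := ⟨⟨0, hN⟩⟩
  have key : ∀ a b : ℝ, avg (fun e : Fin k → Fin N =>
      (∏ i, ((1 + a * sg (σ (e i))) / 2)) * ∏ i, ((1 + b * sg (τ (e i))) / 2)) =
      ((1 + a * b * rho σ τ) / 4) ^ k := by
    intro a b
    simp only [← Finset.prod_mul_distrib]
    rw [avg_prodfun (fun v => ((1 + a * sg (σ v)) / 2) * ((1 + b * sg (τ v)) / 2))]
    have : (fun v => ((1 + a * sg (σ v)) / 2) * ((1 + b * sg (τ v)) / 2)) =
      fun v => ((1/4:ℝ) + (a/4) * sg (σ v)) + ((b/4) * sg (τ v) + (a * b / 4) * (sg (σ v) * sg (τ v))) := by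
      funext v; ring
    rw [this, avg_add, avg_add, avg_add, avg_mul, avg_mul, avg_mul, avg_const, avg_sg σ h, avg_sg τ h']
    unfold rho
    congr 1; ring
  have : (fun e : Fin k → Fin N => aeI σ e * aeI τ e) = fun e =>
      ((∏ i, ((1 + 1 * sg (σ (e i))) / 2)) * ∏ i, ((1 + 1 * sg (τ (e i))) / 2) +
      (∏ i, ((1 + 1 * sg (σ (e i))) / 2)) * ∏ i, ((1 + (-1) * sg (τ (e i))) / 2)) +
      ((∏ i, ((1 + (-1) * sg (σ (e i))) / 2)) * ∏ i, ((1 + 1 * sg (τ (e i))) / 2) +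
      (∏ i, ((1 + (-1) * sg (σ (e i))) / 2)) * ∏ i, ((1 + (-1) * sg (τ (e i))) / 2)) := by
    funext e
    unfold aeI
    simp only [one_mul, neg_mul, ← sub_eq_add_neg]
    ring
  rw [this, avg_add, avg_add, avg_add, key, key, key, key]
  unfold GG
  ring_nf

theorem avg_ok (hN : 0 < N) (hk : 0 < k) (σ : Fin N → Bool) (h : σ ∈ Bal N) :
    avg (fun e : Fin k → Fin N => if okc σ e then (1:ℝ) else 0) = 1 - qq k := by
  have : Nonempty (Fin N) := ⟨⟨0, hN⟩⟩
  simp only [ok_ind hk]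
  rw [avg_sub, avg_const, avg_ae hN σ h]

theorem avg_ok2 (hN : 0 < N) (hk : 0 < k) (σ τ : Fin N → Bool) (h : σ ∈ Bal N) (h' : τ ∈ Bal N) :
    avg (fun e : Fin k → Fin N => (if okc σ e then (1:ℝ) else 0) * (if okc τ e then (1:ℝ) else 0))
      = 1 - 2 * qq k + GG k (rho σ τ) := by
  have : Nonempty (Fin N) := ⟨⟨0, hN⟩⟩
  simp only [ok_ind hk]
  have : (fun e : Fin k → Fin N => (1 - aeI σ e) * (1 - aeI τ e)) =
    fun e => ((1 - aeI σ e) - aeI τ e) + aeI σ e * aeI τ e := by funext e; ring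
  rw [this, avg_add, avg_sub, avg_sub, avg_const, avg_ae hN σ h, avg_ae hN τ h', avg_ae2 hN σ τ h h']
  ring

theorem qq_pos (k : ℕ) : 0 < qq k := by unfold qq; positivity

theorem avg_cov (hN : 0 < N) (hk : 0 < k) (hq : qq k < 1) (σ τ : Fin N → Bool) (h : σ ∈ Bal N)
    (h' : τ ∈ Bal N) :
    avg (fun e : Fin k → Fin N => ((if okc σ e then (1:ℝ) else 0) / (1 - qq k) - 1) *
      ((if okc τ e then (1:ℝ) else 0) / (1 - qq k) - 1)) = FF k (rho σ τ) - 1 := by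
  have : Nonempty (Fin N) := ⟨⟨0, hN⟩⟩
  set p := 1 - qq k with hp
  have hp0 : p ≠ 0 := by rw [hp]; linarith
  have : (fun e : Fin k → Fin N => ((if okc σ e then (1:ℝ) else 0) / p - 1) *
      ((if okc τ e then (1:ℝ) else 0) / p - 1)) =
    fun e => ((1 / p^2) * ((if okc σ e then (1:ℝ) else 0) * (if okc τ e then (1:ℝ) else 0))
      - (1/p) * (if okc σ e then (1:ℝ) else 0)) - ((1/p) * (if okc τ e then (1:ℝ) else 0) - 1) := by
    funext e; field_simp
  rw [this, avg_sub, avg_sub, avg_sub, avg_mul, avg_mul, avg_mul, avg_const, avg_ok2 hN hk σ τ h h',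
    avg_ok hN hk σ h, avg_ok hN hk τ h', ← hp]
  unfold FF
  rw [← hp]; field_simp; ring

theorem rho_abs (σ τ : Fin N → Bool) : |rho σ τ| ≤ 1 := by
  unfold rho avg
  rw [abs_div]
  simp only [Fintype.card_fin, Nat.abs_cast]
  apply div_le_one_of_le₀ _ (Nat.cast_nonneg _)
  refine (Finset.abs_sum_le_sum_abs _ _).trans ?_
  have : ∀ v, |sg (σ v) * sg (τ v)| = 1 := by
    intro v; cases σ v <;> cases τ v <;> simp [sg]
  simp [this]

def light {N : ℕ} (r : ℝ) (σ τ : Fin N → Bool) : Prop := |rho σ τ| ≤ r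

/-- averaging a pair function over S×S -/
theorem pair_avg_le {B : Type} (L : B → B → Prop) (S : Finset B) (hS : S.Nonempty) (θ v : ℝ)
    (hh : heavy L S ≤ θ * (S.card : ℝ)^2) (f : B → B → ℝ)
    (h1 : ∀ σ ∈ S, ∀ τ ∈ S, L σ τ → f σ τ ≤ v) (h2 : ∀ σ ∈ S, ∀ τ ∈ S, f σ τ ≤ v + 1) :
    (1 / (S.card : ℝ)^2) * ∑ σ ∈ S, ∑ τ ∈ S, f σ τ ≤ v + θ := by
  have hc : (0:ℝ) < S.card := by exact_mod_cast hS.card_pos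
  have : ∑ σ ∈ S, ∑ τ ∈ S, f σ τ ≤ v * (S.card : ℝ)^2 + heavy L S := by
    calc _ ≤ ∑ σ ∈ S, ∑ τ ∈ S, (v + if ¬ L σ τ then (1:ℝ) else 0) := by
          apply Finset.sum_le_sum; intro σ hσ
          apply Finset.sum_le_sum; intro τ hτ
          by_cases hL : L σ τ
          · simpa [hL] using h1 σ hσ τ hτ hL
          · simpa [hL] using h2 σ hσ τ hτ
      _ = _ := by
          unfold heavy
          rw [Finset.card_filter, Finset.sum_product]
          push_cast
          simp only [Finset.sum_add_distrib, Finset.sum_const, nsmul_eq_mul]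
          ring
  rw [one_div, inv_mul_eq_div, div_le_iff₀ (by positivity)]
  linarith

theorem conc_h1 (hN : 0 < N) (hk : 0 < k) (hq : qq k < 1) (r v θ : ℝ)
    (hv : ∀ x : ℝ, |x| ≤ r → FF k x - 1 ≤ v) (hv1 : ∀ x : ℝ, |x| ≤ 1 → FF k x - 1 ≤ 1) (hv0 : 0 ≤ v)
    (S : Finset (Fin N → Bool)) (hSB : S ⊆ Bal N) (hS : S.Nonempty)
    (hh : heavy (light r) S ≤ θ * (S.card : ℝ) ^ 2) :
    avg (fun e : Fin k → Fin N => (((act okc S e).card : ℝ) / ((1 - qq k) * S.card) - 1) ^ 2) ≤ v + θ := by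
  have hc : (0:ℝ) < S.card := by exact_mod_cast hS.card_pos
  have hp : 0 < 1 - qq k := by linarith
  have e1 : (fun e : Fin k → Fin N => (((act okc S e).card : ℝ) / ((1 - qq k) * S.card) - 1) ^ 2) =
      fun e => (1 / (S.card : ℝ)^2) * ∑ σ ∈ S, ∑ τ ∈ S,
        (((if okc σ e then (1:ℝ) else 0) / (1 - qq k) - 1) *
      ((if okc τ e then (1:ℝ) else 0) / (1 - qq k) - 1)) := by
    funext e
    rw [← Finset.sum_mul_sum, Finset.sum_sub_distrib, ← Finset.sum_div]
    have : ∑ σ ∈ S, (if okc σ e then (1:ℝ) else 0) = ((act okc S e).card : ℝ) := by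
      rw [act, Finset.card_filter]; push_cast; rfl
    rw [this]
    simp
    field_simp
  rw [e1, avg_mul, avg_sum]
  simp only [avg_sum]
  have e2 : ∑ σ ∈ S, ∑ τ ∈ S, avg (fun e : Fin k → Fin N =>
      ((if okc σ e then (1:ℝ) else 0) / (1 - qq k) - 1) *
      ((if okc τ e then (1:ℝ) else 0) / (1 - qq k) - 1)) = ∑ σ ∈ S, ∑ τ ∈ S, (FF k (rho σ τ) - 1) := by
    apply Finset.sum_congr rfl; intro σ hσ
    apply Finset.sum_congr rfl; intro τ hτ
    exact avg_cov hN hk hq σ τ (hSB hσ) (hSB hτ)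
  rw [e2]
  apply pair_avg_le (light r) S hS θ v hh
  · intro σ _ τ _ h; exact hv _ h
  · intro σ _ τ _; have := hv1 _ (rho_abs σ τ); linarith

theorem avg_cons {V : Type} [Fintype V] (k : ℕ) (f : (Fin (k+1) → V) → ℝ) :
    avg f = avg (fun a => avg (fun e : Fin k → V => f (Fin.cons a e))) := by
  unfold avg
  have : ∑ h, f h = ∑ a, ∑ e : Fin k → V, f (Fin.cons a e) := by
    rw [← Fintype.sum_equiv (Fin.consEquiv (fun _ : Fin (k+1) => V)) (fun x => f (Fin.cons x.1 x.2)) f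
      (fun x => rfl), Fintype.sum_prod_type]
  rw [this, ← Finset.sum_div, div_div]
  simp [pow_succ]

theorem avg_four {V : Type} [Fintype V] [Nonempty V] (k : ℕ) (g : V → V → ℝ) :
    avg (fun e : Fin (k+4) → V => g (e 0) (e 1) * g (e 2) (e 3)) =
      (avg (fun a => avg (fun b => g a b))) ^ 2 := by
  rw [avg_cons]
  simp only [avg_cons]
  have : ∀ (a b c d : V) (e : Fin k → V),
    g ((Fin.cons a (Fin.cons b (Fin.cons c (Fin.cons d e : Fin (k+1) → V) : Fin (k+2) → V) : Fin (k+3) → V) : Fin (k+4) → V) 0)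
     ((Fin.cons a (Fin.cons b (Fin.cons c (Fin.cons d e : Fin (k+1) → V) : Fin (k+2) → V) : Fin (k+3) → V) : Fin (k+4) → V) 1)
    * g ((Fin.cons a (Fin.cons b (Fin.cons c (Fin.cons d e : Fin (k+1) → V) : Fin (k+2) → V) : Fin (k+3) → V) : Fin (k+4) → V) 2)
     ((Fin.cons a (Fin.cons b (Fin.cons c (Fin.cons d e : Fin (k+1) → V) : Fin (k+2) → V) : Fin (k+3) → V) : Fin (k+4) → V) 3)
     = g a b * g c d := fun a b c d e => rfl
  simp only [this, avg_const, avg_mul]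
  have h2 : ∀ X : ℝ, ∀ f : V → ℝ, avg (fun b => f b * X) = avg f * X := by
    intro X f; simp only [mul_comm _ X, avg_mul]
  simp only [h2, sq]

end conc
end
end HC

namespace HC
open Finset

noncomputable section
section conc2
open Classical
variable {N k : ℕ}

theorem conc_h2 (hN : 0 < N) (hq : qq (k+4) < 1) (r θ : ℝ) (hr : 0 ≤ r)
    (S : Finset (Fin N → Bool)) (hS : S.Nonempty)
    (hh : heavy (light r) S ≤ θ * (S.card : ℝ) ^ 2) :
    avg (fun e : Fin (k+4) → Fin N => if ((act okc S e).card : ℝ) < (1 - qq (k+4)) / 10 * S.card then (1:ℝ) else 0)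
      ≤ 3 * (r ^ 2 + θ) ^ 2 := by
  have : Nonempty (Fin N) := ⟨⟨0, hN⟩⟩
  have hc : (0:ℝ) < S.card := by exact_mod_cast hS.card_pos
  set p := 1 - qq (k+4) with hp
  have hp1 : p < 1 := by have := qq_pos (k+4); linarith
  set cc : Fin N → Fin N → ℝ := fun i j => (1 / (S.card : ℝ)) * ∑ σ ∈ S, sg (σ i) * sg (σ j) with hcc
  -- correlation large for bad edge
  have hcor : ∀ e : Fin (k+4) → Fin N, ((act okc S e).card : ℝ) < p / 10 * S.card →
      ∀ i j, 4 / 5 ≤ cc (e i) (e j) := by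
    intro e he i j
    have hpt : ∀ σ ∈ S, 1 - 2 * (if okc σ e then (1:ℝ) else 0) ≤ sg (σ (e i)) * sg (σ (e j)) := by
      intro σ _
      by_cases ho : okc σ e
      · rw [if_pos ho]; cases σ (e i) <;> cases σ (e j) <;> norm_num [sg]
      · rw [if_neg ho]
        have : σ (e i) = σ (e j) := by
          by_contra hne
          apply ho
          unfold okc
          cases h1 : σ (e i) <;> cases h2 : σ (e j)
          · simp [h1, h2] at hne
          · exact ⟨⟨j, h2⟩, ⟨i, h1⟩⟩
          · exact ⟨⟨i, h1⟩, ⟨j, h2⟩⟩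
          · simp [h1, h2] at hne
        rw [this, sg_sq]; simp
    have hs := Finset.sum_le_sum hpt
    rw [Finset.sum_sub_distrib, ← Finset.mul_sum] at hs
    have : ∑ σ ∈ S, (if okc σ e then (1:ℝ) else 0) = ((act okc S e).card : ℝ) := by
      rw [act, Finset.card_filter]; push_cast; rfl
    rw [this] at hs
    simp only [Finset.sum_const, nsmul_eq_mul, mul_one] at hs
    simp only [hcc]
    rw [one_div, inv_mul_eq_div, le_div_iff₀ hc]
    nlinarith
  have hb : ∀ e : Fin (k+4) → Fin N, (if ((act okc S e).card : ℝ) < p / 10 * S.card then (1:ℝ) else 0)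
      ≤ 3 * ((cc (e 0) (e 1))^2 * (cc (e 2) (e 3))^2) := by
    intro e
    split_ifs with he
    · have a := hcor e he 0 1
      have b := hcor e he 2 3
      have a2 : (16/25 : ℝ) ≤ (cc (e 0) (e 1))^2 := by nlinarith
      have b2 : (16/25 : ℝ) ≤ (cc (e 2) (e 3))^2 := by nlinarith
      have : (16/25 : ℝ) * (16/25) ≤ (cc (e 0) (e 1))^2 * (cc (e 2) (e 3))^2 := by gcongr
      linarith
    · positivity
  refine (avg_mono hb).trans ?_
  rw [avg_mul, avg_four k (fun i j => (cc i j)^2)]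
  have e3 : avg (fun i => avg (fun j => (cc i j)^2)) =
      (1 / (S.card : ℝ)^2) * ∑ σ ∈ S, ∑ τ ∈ S, (rho σ τ)^2 := by
    have : ∀ i j, (cc i j)^2 = (1 / (S.card : ℝ)^2) * ∑ σ ∈ S, ∑ τ ∈ S,
        (sg (σ i) * sg (τ i)) * (sg (σ j) * sg (τ j)) := by
      intro i j
      simp only [hcc]
      rw [mul_pow, sq (∑ σ ∈ S, _), Finset.sum_mul_sum, div_pow, one_pow]
      congr 1
      apply Finset.sum_congr rfl; intro σ _
      apply Finset.sum_congr rfl; intro τ _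
      ring
    simp only [this, avg_mul, avg_sum]
    congr 1
    apply Finset.sum_congr rfl; intro σ _
    apply Finset.sum_congr rfl; intro τ _
    change avg (fun i => (sg (σ i) * sg (τ i)) * rho σ τ) = _
    have : (fun i => (sg (σ i) * sg (τ i)) * rho σ τ) = fun i => rho σ τ * (sg (σ i) * sg (τ i)) := by
      funext i; ring
    rw [this, avg_mul, sq]; rfl
  rw [e3]
  have := pair_avg_le (light r) S hS θ (r^2) hh (fun σ τ => (rho σ τ)^2)
    (fun σ _ τ _ h => by
      have : |rho σ τ| ^ 2 ≤ r ^ 2 := by unfold light at h; gcongr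
      rwa [sq_abs] at this)
    (fun σ _ τ _ => by
      have h1 := rho_abs σ τ
      have : |rho σ τ| ^ 2 ≤ 1 := by nlinarith [abs_nonneg (rho σ τ)]
      rw [sq_abs] at this; nlinarith [sq_nonneg r])
  gcongr

theorem pair_sol (hN : 0 < N) (hk : 0 < k) (r : ℝ) (s : ℕ) :
    Ex s (fun h : Fin s → (Fin k → Fin N) => heavy (light r) (sol okc (Bal N) h)) =
    ∑ σ ∈ Bal N, ∑ τ ∈ Bal N, if ¬ light r σ τ then (1 - 2 * qq k + GG k (rho σ τ)) ^ s else 0 := by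
  have e1 : (fun h : Fin s → (Fin k → Fin N) => heavy (light r) (sol okc (Bal N) h)) =
    fun h => ∑ σ ∈ Bal N, ∑ τ ∈ Bal N, (if ¬ light r σ τ then (1:ℝ) else 0) *
      ∏ i, ((if okc σ (h i) then (1:ℝ) else 0) * (if okc τ (h i) then (1:ℝ) else 0)) := by
    funext h
    have hi : ∀ σ : Fin N → Bool, ∏ i, (if okc σ (h i) then (1:ℝ) else 0) = if ∀ i, okc σ (h i) then 1 else 0 := by
      intro σ
      rw [Finset.prod_ite_zero]; simp
    simp only [Finset.prod_mul_distrib, hi]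
    unfold heavy sol
    rw [Finset.card_filter, Finset.sum_product, Finset.sum_filter]
    push_cast
    apply Finset.sum_congr rfl; intro σ _
    split_ifs with hσ
    · rw [Finset.sum_filter]
      apply Finset.sum_congr rfl; intro τ _
      split_ifs <;> simp
    · simp
  rw [e1, Ex_sum]
  apply Finset.sum_congr rfl; intro σ hσ
  rw [Ex_sum]
  apply Finset.sum_congr rfl; intro τ hτ
  rw [Ex_mul, Ex_prod (fun e => (if okc σ e then (1:ℝ) else 0) * (if okc τ e then (1:ℝ) else 0)),
    avg_ok2 hN hk σ τ hσ hτ]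
  split_ifs <;> simp

def agr (σ τ : Fin N → Bool) : Finset (Fin N) := univ.filter (fun v => σ v = τ v)

theorem rho_agr (σ τ : Fin N → Bool) : rho σ τ = (2 * ((agr σ τ).card : ℝ) - N) / N := by
  unfold rho avg agr
  rw [Finset.card_filter]
  push_cast
  have : ∀ v, sg (σ v) * sg (τ v) = 2 * (if σ v = τ v then (1:ℝ) else 0) - 1 := by
    intro v; cases σ v <;> cases τ v <;> norm_num [sg]
  simp only [this, Finset.sum_sub_distrib, ← Finset.mul_sum]
  simp

theorem sum_agr_le (σ : Fin N → Bool) (T : Finset (Fin N → Bool)) (f : ℕ → ℝ) (hf : ∀ a, 0 ≤ f a) :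
    ∑ τ ∈ T, f (agr σ τ).card ≤ ∑ a ∈ range (N+1), (N.choose a : ℝ) * f a := by
  have hinj : Function.Injective (fun τ : Fin N → Bool => agr σ τ) := by
    intro τ τ' h
    funext v
    have : v ∈ agr σ τ ↔ v ∈ agr σ τ' := by simp only at h; rw [h]
    simp only [agr, Finset.mem_filter, Finset.mem_univ, true_and] at this
    revert this
    cases σ v <;> cases τ v <;> cases τ' v <;> simp
  calc ∑ τ ∈ T, f (agr σ τ).card = ∑ A ∈ T.image (fun τ => agr σ τ), f A.card := by
        rw [Finset.sum_image (fun x _ y _ h => hinj h)]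
    _ ≤ ∑ A ∈ (univ : Finset (Fin N)).powerset, f A.card := by
        apply Finset.sum_le_sum_of_subset_of_nonneg
        · intro A _; simp
        · intro _ _ _; exact hf _
    _ = _ := by
        rw [Finset.sum_powerset_apply_card]
        simp

theorem Bal_card (P : ℕ) (hP : 0 < P) : (2:ℝ) ^ (2 * P) ≤ (2 * P : ℕ) * ((Bal (2 * P)).card : ℝ) := by
  have h1 := Nat.four_pow_le_two_mul_self_mul_centralBinom P hP
  have h2 : P.centralBinom ≤ (Bal (2 * P)).card := by
    rw [Nat.centralBinom]
    have : ((univ : Finset (Fin (2*P))).powersetCard P).card = (2 * P).choose P := by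
      rw [Finset.card_powersetCard]; simp
    rw [← this]
    apply Finset.card_le_card_of_injOn (fun A v => decide (v ∈ A))
    · intro A hA
      rw [Finset.mem_coe, Finset.mem_powersetCard] at hA
      rw [Finset.mem_coe, Bal, Finset.mem_filter]; refine ⟨Finset.mem_univ _, ?_⟩
      have : ∀ v : Fin (2*P), sg (decide (v ∈ A)) = 2 * (if v ∈ A then (1:ℝ) else 0) - 1 := by
        intro v; by_cases h : v ∈ A <;> norm_num [sg, h]
      simp only [this, Finset.sum_sub_distrib, ← Finset.mul_sum]
      have hA' := hA.2
      simp [hA']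
    · intro A _ A' _ h
      ext v
      have := congrFun h v
      simpa using this
  have h3 : 4 ^ P ≤ 2 * P * (Bal (2*P)).card := h1.trans (Nat.mul_le_mul_left _ h2)
  rw [pow_mul]
  norm_num
  exact_mod_cast h3

theorem conc_h3 (P : ℕ) (hP : 0 < P) (hN : N = 2 * P) (hk : 0 < k) (hq : qq k < 1) (r D : ℝ)
    (hF1 : ∀ x : ℝ, |x| ≤ 1 → 0 ≤ FF k x) (s : ℕ) (hD0 : 0 ≤ D)
    (hD : ∀ a ≤ N, r < |(2 * (a:ℝ) - N) / N| → (N.choose a : ℝ) * FF k ((2 * (a:ℝ) - N) / N) ^ s ≤ 2 ^ N * D) :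
    Ex s (fun h : Fin s → (Fin k → Fin N) => heavy (light r) (sol okc (Bal N) h)) ≤
      ((N + 1 : ℝ) ^ 2 * D) * (((Bal N).card : ℝ) * (1 - qq k) ^ s) ^ 2 := by
  have hN0 : 0 < N := by omega
  rw [pair_sol hN0 hk]
  have hp : 0 < 1 - qq k := by linarith
  set p := 1 - qq k with hpdef
  have hfac : ∀ x, (1 - 2 * qq k + GG k x) ^ s = (p ^ s) ^ 2 * FF k x ^ s := by
    intro x
    unfold FF
    rw [← hpdef, ← pow_mul, mul_comm s 2, pow_mul, ← mul_pow]
    congr 1; field_simp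
  set f : ℕ → ℝ := fun a => if a ≤ N ∧ r < |(2 * (a:ℝ) - N) / N| then FF k ((2 * (a:ℝ) - N) / N) ^ s else 0 with hf
  have hf0 : ∀ a, 0 ≤ f a := by
    intro a
    simp only [hf]
    split_ifs with h
    · apply pow_nonneg
      apply hF1
      have hNr : (0:ℝ) < N := by exact_mod_cast hN0
      have ha : (a:ℝ) ≤ N := by exact_mod_cast h.1
      have ha0 : (0:ℝ) ≤ a := Nat.cast_nonneg _
      rw [abs_div, abs_of_pos hNr, div_le_one hNr, abs_le]
      constructor <;> linarith
    · exact le_rfl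
  have hb : (2:ℝ)^N ≤ (N+1 : ℝ) * ((Bal N).card : ℝ) := by
    have := Bal_card P hP
    rw [← hN] at this
    have h0 : (0:ℝ) ≤ ((Bal N).card : ℝ) := Nat.cast_nonneg _
    linarith
  calc _ = (p^s)^2 * ∑ σ ∈ Bal N, ∑ τ ∈ Bal N, f (agr σ τ).card := by
        rw [Finset.mul_sum]
        apply Finset.sum_congr rfl; intro σ _
        rw [Finset.mul_sum]
        apply Finset.sum_congr rfl; intro τ _
        rw [hfac]
        simp only [hf]
        have hle : (agr σ τ).card ≤ N := by
          have := Finset.card_le_univ (agr σ τ); simpa using this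
        rw [← rho_agr]
        simp only [light, not_le, hle, true_and]
        split_ifs <;> simp
    _ ≤ (p^s)^2 * ∑ σ ∈ Bal N, ((N+1 : ℝ) * (2 ^ N * D)) := by
        gcongr with σ _
        refine (sum_agr_le σ (Bal N) f hf0).trans ?_
        calc _ ≤ ∑ a ∈ range (N+1), ((2:ℝ) ^ N * D) := by
              apply Finset.sum_le_sum
              intro a ha
              have ha' : a ≤ N := by simp at ha; omega
              simp only [hf]
              split_ifs with h
              · exact hD a h.1 h.2
              · simp; positivity
          _ = _ := by simp
    _ = (p^s)^2 * (((Bal N).card : ℝ) * (N+1) * D * 2 ^ N) := by rw [Finset.sum_const, nsmul_eq_mul]; ring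
    _ ≤ (p^s)^2 * (((Bal N).card : ℝ) * (N+1) * D * ((N+1 : ℝ) * ((Bal N).card : ℝ))) := by gcongr
    _ = _ := by ring

theorem conc_main (P : ℕ) (hP : 0 < P) (hN : N = 2 * P) (hq : qq (k+4) < 1) (r v D τ μ : ℝ)
    (hr : 0 ≤ r) (hv0 : 0 ≤ v) (hD0 : 0 ≤ D) (hτ : 0 < τ) (hμ : 0 < μ)
    (hF1 : ∀ x : ℝ, |x| ≤ 1 → 0 ≤ FF (k+4) x)
    (hv : ∀ x : ℝ, |x| ≤ r → FF (k+4) x - 1 ≤ v) (hv1 : ∀ x : ℝ, |x| ≤ 1 → FF (k+4) x - 1 ≤ 1)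
    (m : ℕ)
    (hD : ∀ s < m, ∀ a ≤ N, r < |(2 * (a:ℝ) - N) / N| →
      (N.choose a : ℝ) * FF (k+4) ((2 * (a:ℝ) - N) / N) ^ s ≤ 2 ^ N * D) :
    Ex m (fun h : Fin m → (Fin (k+4) → Fin N) => if sol okc (Bal N) h = ∅ then (1:ℝ) else 0) ≤
      m * ((N + 1 : ℝ) ^ 2 * D / τ + μ * (1 + 10 * (v + τ / μ^2)) ^ m + 3 * (r ^ 2 + τ / μ^2) ^ 2) := by
  have hN0 : 0 < N := by omega
  have : Nonempty (Fin N) := ⟨⟨0, hN0⟩⟩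
  have hB : (Bal N).Nonempty := by
    have := Bal_card P hP
    rw [← hN] at this
    rw [← Finset.card_pos]
    by_contra h
    have h0 : (Bal N).card = 0 := by omega
    rw [h0] at this
    have h2 : (0:ℝ) < 2 ^ N := by positivity
    simp only [Nat.cast_zero, mul_zero] at this; linarith
  have h := chain_main (okc : (Fin N → Bool) → (Fin (k+4) → Fin N) → Prop) (Bal N) (light r) hB
    (1 - qq (k+4)) τ μ (v + τ / μ^2) (3 * (r ^ 2 + τ / μ^2) ^ 2) ((N + 1 : ℝ) ^ 2 * D)
    (by linarith) hτ hμ (by positivity) (by positivity)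
    (fun σ hσ => avg_ok hN0 (by omega) σ hσ)
    (fun S hSB hS hh => conc_h1 hN0 (by omega) hq r v _ hv hv1 hv0 S hSB hS hh)
    (fun S hSB hS hh => conc_h2 hN0 hq r _ hr S hS hh) m
    (fun s hs => conc_h3 P hP hN (by omega) hq r D hF1 s hD0 (hD s hs))
  convert h

end conc2
end
end HC

namespace HC
open Finset

noncomputable section

def EE (k : ℕ) (x : ℝ) : ℝ := ((1 + x) ^ k + (1 - x) ^ k) / 2

def c1 (k : ℕ) : ℝ := Real.log 2 / qq k - Real.log 2 / 2 - (1 + 1 / (k:ℝ)) / 2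

structure Big (k : ℕ) : Prop where
  h1 : 100 ≤ k
  h2 : qq k * (20000 * (k:ℝ) ^ 3) ≤ 1
  h3 : 2 * (k:ℝ) ^ 2 * (3 / 4 : ℝ) ^ k ≤ 1 / 4
  h4 : (k:ℝ) / 10 + 3 ≤ k * Real.log 2 - 2 * Real.log k
  h5 : (3 / (k:ℝ)) * (1 + Real.log (10 * k)) ≤ 1 / 25

theorem eventually_Big : ∀ᶠ k : ℕ in Filter.atTop, Big k := by
  have a2 : ∀ᶠ k : ℕ in Filter.atTop, qq k * (20000 * (k:ℝ) ^ 3) ≤ 1 := by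
    have := (tendsto_pow_const_mul_const_pow_of_abs_lt_one 3 (r := (1/2:ℝ)) (by norm_num [abs_lt])).const_mul 40000
    rw [mul_zero] at this
    filter_upwards [this.eventually (eventually_le_nhds (zero_lt_one))] with k hk
    unfold qq; linarith
  have a3 : ∀ᶠ k : ℕ in Filter.atTop, 2 * (k:ℝ) ^ 2 * (3 / 4 : ℝ) ^ k ≤ 1 / 4 := by
    have := (tendsto_pow_const_mul_const_pow_of_abs_lt_one 2 (r := (3/4:ℝ)) (by norm_num [abs_lt])).const_mul 2
    rw [mul_zero] at this
    filter_upwards [this.eventually (eventually_le_nhds (show (0:ℝ) < 1/4 by norm_num))] with k hk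
    linarith
  have hl : Filter.Tendsto (fun k : ℕ => Real.log k / k) Filter.atTop (nhds 0) := by
    have := Real.isLittleO_log_id_atTop.tendsto_div_nhds_zero
    exact this.comp tendsto_natCast_atTop_atTop
  have hi : Filter.Tendsto (fun k : ℕ => 1 / (k:ℝ)) Filter.atTop (nhds 0) := tendsto_one_div_atTop_nhds_zero_nat
  filter_upwards [a2, a3, Filter.eventually_ge_atTop 100,
    hl.eventually (eventually_le_nhds (show (0:ℝ) < 1/1000 by norm_num)),
    hi.eventually (eventually_le_nhds (show (0:ℝ) < 1/1000 by norm_num))] with k h2 h3 h1 hl hi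
  have hk : (0:ℝ) < k := by have : 0 < k := by omega
                            exact_mod_cast this
  have h69 := Real.log_two_gt_d9
  rw [div_le_iff₀ hk] at hl hi
  refine ⟨h1, h2, h3, by nlinarith, ?_⟩
  rw [Real.log_mul (by norm_num) hk.ne']
  have h10 : Real.log 10 ≤ 4 := by
    rw [Real.log_le_iff_le_exp (by norm_num)]
    have := Real.add_one_le_exp (4:ℝ)
    have h3 : (2:ℝ) ≤ Real.exp 1 := by have := Real.exp_one_gt_d9; linarith
    have : Real.exp 4 = Real.exp 1 ^ 4 := by rw [← Real.exp_nat_mul]; norm_num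
    rw [this]
    have : (2:ℝ)^4 ≤ Real.exp 1 ^ 4 := by gcongr
    linarith
  rw [div_mul_eq_mul_div, div_le_iff₀ hk]
  nlinarith

theorem FF_eq (k : ℕ) (hq : qq k < 1) (x : ℝ) :
    FF k x = 1 + qq k ^ 2 / (1 - qq k) ^ 2 * (EE k x - 1) := by
  have hp : (1 - qq k) ≠ 0 := by linarith
  have : GG k x = qq k ^ 2 * EE k x := by
    unfold GG EE qq
    rw [div_pow, div_pow, mul_pow, ← pow_mul, mul_comm k 2, pow_mul]
    field_simp
    norm_num
    rw [one_div, inv_pow]; field_simp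
  unfold FF
  rw [this]
  field_simp
  ring

theorem EE_ge (k : ℕ) (x : ℝ) (hx : |x| ≤ 1) : 1 ≤ EE k x := by
  have := abs_le.mp hx
  have h1 := one_add_mul_le_pow (show (-2:ℝ) ≤ x by linarith) k
  have h2 := one_add_mul_le_pow (show (-2:ℝ) ≤ -x by linarith) k
  unfold EE
  rw [← sub_eq_add_neg] at h2
  linarith

theorem pow_up (k : ℕ) (u : ℝ) (hu : |u| ≤ 1) :
    (1 + u) ^ k ≤ 1 + k * u + k ^ 2 * u ^ 2 * (1 + |u|) ^ k := by
  have h0 : 0 ≤ 1 + u := by have := abs_le.mp hu; linarith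
  have h1 : u ≤ |u| := le_abs_self u
  induction k with
  | zero => simp
  | succ k ih =>
    have hA : 1 ≤ (1 + |u|) ^ k := one_le_pow₀ (by have := abs_nonneg u; linarith)
    have hs := sq_nonneg u
    have ha := abs_nonneg u
    have hk : (0:ℝ) ≤ k := Nat.cast_nonneg k
    set A := (1 + |u|) ^ k
    rw [pow_succ (1+u), pow_succ (1+|u|)]
    push_cast
    have e1 : (1+u)^k * (1+u) ≤ (1 + k * u + k ^ 2 * u ^ 2 * A) * (1 + u) := by gcongr
    have e2 : (k:ℝ)^2 * u^2 * A * (1 + u) ≤ k^2 * u^2 * A * (1+|u|) := by gcongr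
    have e3 : (k:ℝ) * u^2 * 1 ≤ k * u^2 * (A * (1+|u|)) := by
      gcongr; nlinarith
    have e4 : 0 ≤ (k+1) * u^2 * (A * (1+|u|)) := by positivity
    nlinarith

theorem EE_up (k : ℕ) (x : ℝ) (hx : |x| ≤ 1) : EE k x - 1 ≤ k ^ 2 * x ^ 2 * (1 + |x|) ^ k := by
  have h1 := pow_up k x hx
  have h2 := pow_up k (-x) (by rwa [abs_neg])
  rw [abs_neg, neg_sq, ← sub_eq_add_neg] at h2
  unfold EE
  linarith

theorem EE_le (k : ℕ) (hk : 1 ≤ k) (x : ℝ) (hx : |x| ≤ 1) : qq k * EE k x ≤ 1 := by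
  have := abs_le.mp hx
  have h1 : (1 + x) ^ k + (1 - x)^k ≤ ((1+x) + (1-x)) ^ k :=
    pow_add_pow_le (by linarith) (by linarith) (by omega)
  have h2 : (1 + x) + (1 - x) = 2 := by ring
  rw [h2] at h1
  unfold qq EE
  rw [div_pow]
  field_simp
  simpa using h1

section
variable {k : ℕ}

theorem Big.kpos (hB : Big k) : (100:ℝ) ≤ k := by exact_mod_cast hB.h1

theorem Big.q2 (hB : Big k) : qq k * (20000 * (k:ℝ) ^ 2) * k ≤ 1 := by
  have := hB.h2; linarith

theorem Big.q1 (hB : Big k) : qq k * (20000 * (k:ℝ)) ≤ 1 / 100 / 100 := by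
  have := hB.h2; have hk := hB.kpos; have hq := qq_pos k
  have : qq k * (20000 * (k:ℝ)) * (100 * 100) ≤ qq k * (20000 * (k:ℝ)) * (k * k) := by gcongr
  linarith

theorem Big.q0 (hB : Big k) : qq k ≤ 1 / 1000000 := by
  have := hB.q1; have hk := hB.kpos; have hq := qq_pos k
  have : qq k * (20000 * 100) ≤ qq k * (20000 * k) := by gcongr
  linarith


theorem FF_ge (hB : Big k) (x : ℝ) (hx : |x| ≤ 1) : 1 ≤ FF k x := by
  have hq := hB.q0
  rw [FF_eq k (by linarith)]
  have := EE_ge k x hx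
  have : 0 ≤ qq k ^ 2 / (1 - qq k) ^ 2 * (EE k x - 1) := by
    apply mul_nonneg (by positivity); linarith
  linarith

theorem cq_bd (hB : Big k) : qq k ^ 2 / (1 - qq k) ^ 2 ≤ (1.01:ℝ) * qq k ^ 2 := by
  have hq := hB.q0
  have := qq_pos k
  rw [div_le_iff₀ (by nlinarith)]
  have h2 := sq_nonneg (qq k)
  have : (1:ℝ) ≤ 1.01 * (1 - qq k)^2 := by nlinarith
  nlinarith

theorem FF_le (hB : Big k) (x : ℝ) (hx : |x| ≤ 1) : FF k x - 1 ≤ 1 := by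
  have hq := hB.q0
  have hq0 := qq_pos k
  rw [FF_eq k (by linarith)]
  have h1 := EE_ge k x hx
  have h2 := EE_le k (by have := hB.h1; omega) x hx
  have : qq k ^ 2 / (1 - qq k) ^ 2 * (EE k x - 1) ≤ (1.01:ℝ) * qq k ^ 2 * (EE k x - 1) := by
    apply mul_le_mul_of_nonneg_right (cq_bd hB); linarith
  nlinarith

theorem FF_small (hB : Big k) (x r : ℝ) (hr : r ≤ 1 / k) (hx : |x| ≤ r) :
    FF k x - 1 ≤ 4 * k ^ 2 * qq k ^ 2 * r ^ 2 := by
  have hq := hB.q0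
  have hq0 := qq_pos k
  have hk := hB.kpos
  have hk1 : 1 / (k:ℝ) ≤ 1 := by rw [div_le_one (by linarith)]; linarith
  have hx1 : |x| ≤ 1 := by linarith
  rw [FF_eq k (by linarith)]
  have h1 := EE_ge k x hx1
  have h2 := EE_up k x hx1
  have h3 : (1 + |x|) ^ k ≤ 3 := by
    have : 1 + |x| ≤ Real.exp (1 / k) := by
      have := Real.add_one_le_exp (1 / (k:ℝ)); linarith
    calc (1 + |x|) ^ k ≤ Real.exp (1/k) ^ k := by gcongr
      _ = Real.exp 1 := by rw [← Real.exp_nat_mul]; congr 1; field_simp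
      _ ≤ 3 := by have := Real.exp_one_lt_d9; linarith
  have h4 : x ^ 2 ≤ r ^ 2 := by rw [← sq_abs x]; gcongr
  have h5 : EE k x - 1 ≤ k ^ 2 * r ^ 2 * 3 := h2.trans (by gcongr)
  have h6 : qq k ^ 2 / (1 - qq k) ^ 2 * (EE k x - 1) ≤ ((1.01:ℝ) * qq k ^ 2) * (k ^ 2 * r ^ 2 * 3) :=
    mul_le_mul (cq_bd hB) h5 (by linarith) (by positivity)
  have : 0 ≤ qq k ^ 2 * (k ^ 2 * r ^ 2) := by positivity
  linarith

theorem c1q (hB : Big k) : c1 k * qq k = Real.log 2 - qq k * (Real.log 2 + 1 + 1 / k) / 2 := by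
  have hq0 := qq_pos k
  unfold c1; field_simp; ring

theorem c1_pos (hB : Big k) : 0 < c1 k ∧ c1 k * qq k ≤ 0.7 := by
  have hq := hB.q0
  have hq0 := qq_pos k
  have hk := hB.kpos
  have h := c1q hB
  have l1 := Real.log_two_gt_d9
  have l2 := Real.log_two_lt_d9
  have hk1 : 1 / (k:ℝ) ≤ 1 := by rw [div_le_one (by linarith)]; linarith
  have hk0 : 0 ≤ 1 / (k:ℝ) := by positivity
  constructor
  · by_contra hc
    push Not at hc
    have : c1 k * qq k ≤ 0 := mul_nonpos_of_nonpos_of_nonneg hc hq0.le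
    nlinarith
  · nlinarith

theorem region1 (hB : Big k) (x : ℝ) (hx : |x| ≤ 1 - 6 / k) : c1 k * Real.log (FF k x) ≤ x ^ 2 / 4 := by
  have hq := hB.q0
  have hq0 := qq_pos k
  have hk := hB.kpos
  have h6 : 0 < 6 / (k:ℝ) := by positivity
  have hx1 : |x| ≤ 1 := by linarith
  have hF := FF_ge hB x hx1
  obtain ⟨hc0, hc⟩ := c1_pos hB
  have hlog : Real.log (FF k x) ≤ FF k x - 1 := Real.log_le_sub_one_of_pos (by linarith)
  have h1 := EE_ge k x hx1
  have e1 : c1 k * Real.log (FF k x) ≤ qq k * (EE k x - 1) := by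
    calc c1 k * Real.log (FF k x) ≤ c1 k * (FF k x - 1) := by gcongr
      _ ≤ c1 k * ((1.01:ℝ) * qq k ^ 2 * (EE k x - 1)) := by
          apply mul_le_mul_of_nonneg_left _ hc0.le
          rw [FF_eq k (by linarith)]
          have := mul_le_mul_of_nonneg_right (cq_bd hB) (show 0 ≤ EE k x - 1 by linarith)
          linarith
      _ = (c1 k * qq k) * (1.01 * (qq k * (EE k x - 1))) := by ring
      _ ≤ 0.7 * (1.01 * (qq k * (EE k x - 1))) := by
          apply mul_le_mul_of_nonneg_right hc
          have : 0 ≤ EE k x - 1 := by linarith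
          positivity
      _ ≤ _ := by
          have : 0 ≤ qq k * (EE k x - 1) := mul_nonneg hq0.le (by linarith)
          linarith
  refine e1.trans ?_
  by_cases hh : |x| ≤ 1 / 2
  · have h2 := EE_up k x hx1
    have h3 : (1 + |x|) ^ k ≤ (3/2) ^ k := by gcongr; linarith
    have h4 : EE k x - 1 ≤ k ^ 2 * x ^ 2 * (3/2) ^ k := h2.trans (by gcongr)
    have h5 : qq k * (EE k x - 1) ≤ qq k * (k ^ 2 * x ^ 2 * (3/2) ^ k) := by gcongr
    have h6 : qq k * (k ^ 2 * x ^ 2 * (3/2) ^ k) = (2 * (k:ℝ) ^ 2 * (3 / 4 : ℝ) ^ k) * x ^ 2 := by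
      have : (3/4:ℝ)^k = (1/2)^k * (3/2)^k := by rw [← mul_pow]; norm_num
      rw [this]; unfold qq; ring
    rw [h6] at h5
    have := mul_le_mul_of_nonneg_right hB.h3 (sq_nonneg x)
    linarith
  · push Not at hh
    have hx2 : 1 / 4 ≤ x ^ 2 := by rw [← sq_abs x]; nlinarith
    have hE : EE k x = EE k |x| := by
      unfold EE
      rcases abs_cases x with ⟨h, _⟩ | ⟨h, _⟩ <;> rw [h]
      rw [sub_neg_eq_add, ← sub_eq_add_neg]; ring
    have h7 : qq k * EE k x = ((1 + |x|) / 2) ^ k + ((1 - |x|)/2) ^ k := by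
      rw [hE]; unfold qq EE
      rw [div_pow, div_pow, div_pow]; field_simp; norm_num
    have h8 : ((1 + |x|) / 2) ^ k ≤ 1 / 20 := by
      have : (1 + |x|) / 2 ≤ Real.exp (- (3 / k)) := by
        have := Real.add_one_le_exp (- (3 / (k:ℝ)))
        have e : 6 / (k:ℝ) = 2 * (3 / k) := by ring
        linarith
      have h0 : 0 ≤ (1 + |x|) / 2 := by have := abs_nonneg x; linarith
      calc ((1 + |x|) / 2) ^ k ≤ Real.exp (- (3 / k)) ^ k := by gcongr
        _ = (Real.exp 3)⁻¹ := by rw [← Real.exp_nat_mul, ← Real.exp_neg]; congr 1; field_simp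
        _ ≤ 1 / 20 := by
          rw [one_div]
          apply inv_anti₀ (by norm_num)
          have : Real.exp 3 = Real.exp 1 ^ 3 := by rw [← Real.exp_nat_mul]; norm_num
          rw [this]
          have h3 : (2.718:ℝ) ≤ Real.exp 1 := by have := Real.exp_one_gt_d9; linarith
          have : (2.718:ℝ)^3 ≤ Real.exp 1 ^ 3 := by gcongr
          norm_num at this ⊢; linarith
    have h9 : ((1 - |x|) / 2) ^ k ≤ 1 / 256 := by
      have h0 : 0 ≤ (1 - |x|) / 2 := by linarith
      calc ((1 - |x|) / 2) ^ k ≤ (1/4) ^ k := pow_le_pow_left₀ h0 (by linarith) k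
        _ ≤ (1/4)^4 := pow_le_pow_of_le_one (by norm_num) (by norm_num) (by have := hB.h1; omega)
        _ = 1/256 := by norm_num
    nlinarith

end
end
end HC

namespace HC
open Finset
noncomputable section
variable {k : ℕ}

theorem FF_d (k : ℕ) (hq : qq k < 1) (d : ℝ) :
    FF k (1 - 2 * d) = (1 - 2 * qq k + qq k * ((1 - d) ^ k + d ^ k)) / (1 - qq k) ^ 2 := by
  unfold FF GG
  have e1 : (1 + (1 - 2 * d)) / 4 = (1/2) * (1 - d) := by ring
  have e2 : (1 - (1 - 2 * d)) / 4 = (1/2) * d := by ring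
  rw [e1, e2, mul_pow, mul_pow]
  congr 1
  unfold qq; ring

theorem FF_neg (k : ℕ) (x : ℝ) : FF k (-x) = FF k x := by
  unfold FF GG; rw [sub_neg_eq_add, ← sub_eq_add_neg]; ring_nf

def psi (k : ℕ) (d : ℝ) : ℝ := Real.log 2 - d - Real.negMulLog d - c1 k * Real.log (FF k (1 - 2 * d))

theorem neg_log_le (q : ℝ) (h0 : 0 < q) (h1 : q ≤ 1/2) : - Real.log (1 - q) ≤ q + q^2/2 + 2 * q^3 := by
  have h := Real.abs_log_sub_add_sum_range_le (x := q) (by rw [abs_of_pos h0]; linarith) 2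
  rw [abs_of_pos h0] at h
  have h2 := (abs_le.mp h).1
  simp only [Finset.sum_range_succ, Finset.sum_range_zero] at h2
  have h3 : q ^ (2+1) / (1 - q) ≤ 2 * q^3 := by
    rw [div_le_iff₀ (by linarith)]
    have h4 : 0 < q^3 := by positivity
    have h5 : q^(2+1) = q^3 := rfl
    rw [h5]; nlinarith
  norm_num at h2 h3
  linarith

theorem psi_lower (hB : Big k) (d A : ℝ) (hd0 : 0 ≤ d) (hd : d ≤ 1/2) (hA : (1 - d) ^ k + d ^ k = A) :
    (1 - A) * (Real.log 2 - 2 * qq k) + qq k * (1 + 1 / k) / 2 - 2 * qq k ^ 2 - d - Real.negMulLog d ≤ psi k d := by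
  have hq := hB.q0
  have hq0 := qq_pos k
  have hk := hB.kpos
  obtain ⟨hc0, hc⟩ := c1_pos hB
  have hA1 : A ≤ 1 := by
    have := pow_add_pow_le (show 0 ≤ 1 - d by linarith) hd0 (show k ≠ 0 by have := hB.h1; omega)
    rw [hA] at this
    have e : 1 - d + d = 1 := by ring
    rw [e, one_pow] at this; exact this
  have hA0 : 0 ≤ A := by rw [← hA]; have : 0 ≤ 1 - d := by linarith
                         positivity
  have hF : FF k (1 - 2*d) = (1 - qq k * (1 - A) / (1 - qq k)) * (1 - qq k)⁻¹ := by
    rw [FF_d k (by linarith), hA]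
    have : (1 - qq k) ≠ 0 := by linarith
    field_simp; ring
  have hp : 0 < 1 - qq k := by linarith
  have hy : qq k * (1 - A) / (1 - qq k) ≤ 1/2 := by
    rw [div_le_iff₀ hp]; nlinarith
  have hy2 : qq k * (1 - A) ≤ qq k * (1 - A) / (1 - qq k) := by
    rw [le_div_iff₀ hp]
    have : 0 ≤ qq k * (1 - A) := mul_nonneg hq0.le (by linarith)
    nlinarith
  have hl : Real.log (FF k (1 - 2*d)) ≤ qq k * A + qq k ^ 2 / 2 + 2 * qq k ^ 3 := by
    rw [hF, Real.log_mul (by linarith) (by positivity), Real.log_inv]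
    have := neg_log_le (qq k) hq0 (by linarith)
    have h2 := Real.log_le_sub_one_of_pos (show 0 < 1 - qq k * (1 - A) / (1 - qq k) by linarith)
    linarith
  have h3 : c1 k * Real.log (FF k (1 - 2*d)) ≤ (c1 k * qq k) * (A + qq k / 2 + 2 * qq k ^ 2) := by
    calc _ ≤ c1 k * (qq k * A + qq k ^ 2 / 2 + 2 * qq k ^ 3) := by gcongr
      _ = _ := by ring
  rw [c1q hB] at h3
  unfold psi
  have l1 := Real.log_two_gt_d9
  have l2 := Real.log_two_lt_d9
  have hk1 : 1 / (k:ℝ) ≤ 1 := by rw [div_le_one (by linarith)]; linarith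
  have hk0 : 0 ≤ 1 / (k:ℝ) := by positivity
  set t := 1 / (k:ℝ)
  set q := qq k
  set L := Real.log 2
  have e1 : (L - q * (L + 1 + t) / 2) * (A + q/2 + 2*q^2) ≤
      L * A + L * q / 2 + 2 * q^2 - q * (L + 1 + t)/2 * A := by
    have a1 : 0 ≤ q * (L + 1 + t) / 2 * (q/2 + 2 * q^2) := by positivity
    have a2 : L * (2 * q^2) ≤ 1 * (2 * q^2) := by gcongr; linarith
    linarith
  have e2 : q * (L + 1 + t)/2 * (1 - A) ≤ 2 * q * (1 - A) := by
    apply mul_le_mul_of_nonneg_right _ (by linarith)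
    nlinarith
  linarith

theorem psi_R1 (hB : Big k) (d : ℝ) (h1 : 1 / (10 * k) ≤ d) (h2 : d ≤ 3 / k) : 0 < psi k d := by
  have hq := hB.q0
  have hq0 := qq_pos k
  have hk := hB.kpos
  have hk' : (0:ℝ) < k := by linarith
  have hd0 : 0 < d := lt_of_lt_of_le (by positivity) h1
  have h3k : 3 / (k:ℝ) ≤ 3/100 := by gcongr
  have := psi_lower hB d _ hd0.le (by linarith) rfl
  refine lt_of_lt_of_le ?_ this
  set A := (1 - d) ^ k + d ^ k with hA
  have hA1 : A ≤ 10/11 + 3/100 * (3/100) := by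
    have a1 : (1 - d) ^ k ≤ 10/11 := by
      calc (1-d)^k ≤ Real.exp (-d) ^ k := by
            have := Real.add_one_le_exp (-d)
            exact pow_le_pow_left₀ (by linarith) (by linarith) k
        _ = (Real.exp (k * d))⁻¹ := by rw [← Real.exp_nat_mul, ← Real.exp_neg]; congr 1; ring
        _ ≤ (11/10 : ℝ)⁻¹ := by
          apply inv_anti₀ (by norm_num)
          have := Real.add_one_le_exp (k * d)
          rw [div_le_iff₀ (by positivity)] at h1
          linarith
        _ = 10/11 := by norm_num
    have a2 : d ^ k ≤ d ^ 2 := pow_le_pow_of_le_one hd0.le (by linarith) (by have := hB.h1; omega)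
    have a3 : d ^ 2 ≤ 3/100 * (3/100) := by nlinarith
    linarith
  have hn : Real.negMulLog d + d ≤ 1/25 := by
    refine le_trans ?_ hB.h5
    have : Real.negMulLog d + d = d * (1 + Real.log (d⁻¹)) := by
      unfold Real.negMulLog; rw [Real.log_inv]; ring
    rw [this]
    have e : d⁻¹ ≤ 10 * k := by
      rw [inv_le_comm₀ hd0 (by positivity), ← one_div]; exact h1
    have e2 : Real.log (d⁻¹) ≤ Real.log (10 * k) := Real.log_le_log (by positivity) e
    have e3 : 0 ≤ Real.log (d⁻¹) := Real.log_nonneg (by rw [one_le_inv₀ hd0]; linarith)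
    apply mul_le_mul h2 (by linarith) (by linarith) (by positivity)
  have l1 := Real.log_two_gt_d9
  have hk0 : 0 ≤ 1 / (k:ℝ) := by positivity
  have : 0 ≤ qq k * (1 + 1/k) / 2 := by positivity
  have g : (0.08:ℝ) * 0.69 ≤ (1 - A) * (Real.log 2 - 2 * qq k) := by
    apply mul_le_mul <;> norm_num at * <;> linarith
  nlinarith

set_option maxHeartbeats 1000000 in
theorem psi_R2 (hB : Big k) (d : ℝ) (h1 : 0 ≤ d) (h2 : d ≤ 1 / (10 * k)) : 0 < psi k d := by
  have hq := hB.q0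
  have hq0 := qq_pos k
  have hk := hB.kpos
  have hk' : (0:ℝ) < k := by linarith
  have h3k : 1 / (10 * (k:ℝ)) ≤ 1/(10 * 100) := by gcongr
  have hlow := psi_lower hB d _ h1 (by linarith) rfl
  refine lt_of_lt_of_le ?_ hlow
  set A := (1 - d) ^ k + d ^ k with hA
  have l1 := Real.log_two_gt_d9
  have l2 := Real.log_two_lt_d9
  have hkd : k * d ≤ 1/10 := by
    rw [le_div_iff₀ (by positivity)] at h2; linarith
  have hkd0 : 0 ≤ k * d := by positivity
  have hA1 : k * d - (k * d)^2 ≤ 1 - A := by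
    have a1 : (1 - d) ^ k ≤ 1 - k * d + (k*d)^2 * (3/4) := by
      calc (1-d)^k ≤ Real.exp (-d) ^ k := by
            have := Real.add_one_le_exp (-d)
            exact pow_le_pow_left₀ (by linarith) (by linarith) k
        _ = Real.exp (- (k * d)) := by rw [← Real.exp_nat_mul]; congr 1; ring
        _ ≤ _ := by
          have := Real.exp_bound' (x := k * d) hkd0 (by linarith) (n := 2) (by norm_num)
          rw [Real.exp_neg]
          have h3 := Real.quadratic_le_exp_of_nonneg hkd0
          rw [inv_le_comm₀ (Real.exp_pos _) (by nlinarith)]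
          refine le_trans ?_ h3
          rw [inv_le_iff_one_le_mul₀ (by nlinarith)]
          set y := (k:ℝ) * d
          have : 0 ≤ y^2 * (1/4 - y/4) := by apply mul_nonneg (by positivity); linarith
          have : 0 ≤ y^4 := by positivity
          nlinarith
    have a2 : d ^ k ≤ d ^ 2 := pow_le_pow_of_le_one h1 (by linarith) (by have := hB.h1; omega)
    have a3 : d ^ 2 ≤ (k*d)^2 * (1/4) := by
      rw [mul_pow]; have : (4:ℝ) ≤ k^2 := by nlinarith
      nlinarith [sq_nonneg d]
    linarith
  have hk0 : 0 < 1 / (k:ℝ) := by positivity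
  have hc1 : (k * d - (k*d)^2) * (Real.log 2 - 2 * qq k) ≤ (1 - A) * (Real.log 2 - 2 * qq k) := by
    apply mul_le_mul_of_nonneg_right hA1; linarith
  have hc2 : k * d * Real.log 2 - (k*d)^2 - 2 * qq k * (k * d) ≤ (k * d - (k*d)^2) * (Real.log 2 - 2 * qq k) := by
    have : (k*d)^2 * Real.log 2 ≤ (k*d)^2 * 1 := by gcongr; linarith
    have : 0 ≤ (k*d)^2 * qq k := by positivity
    linarith
  rcases h1.eq_or_lt with h0 | hd0
  · rw [← h0] at hA ⊢
    have : A = 1 := by rw [hA]; have : k ≠ 0 := by have := hB.h1; omega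
                       simp [this]
    rw [this]
    simp only [Real.negMulLog_zero]
    have : 0 < qq k * (1/k) := by positivity
    nlinarith
  -- main
  set x := d / (qq k / 2) with hx
  have hx0 : 0 < x := by positivity
  have hdx : d = qq k / 2 * x := by rw [hx]; field_simp
  have hlogx : Real.log d = Real.log x - k * Real.log 2 := by
    rw [hx, Real.log_div hd0.ne' (by positivity)]
    have : qq k / 2 = (1/2)^k := by unfold qq; ring
    rw [this, Real.log_pow, one_div, Real.log_inv]; ring
  have hnl : Real.negMulLog d = - d * (Real.log x - k * Real.log 2) := by
    unfold Real.negMulLog; rw [hlogx]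
  rw [hnl]
  suffices 0 < d * (Real.log x - 1 - k * (k * d) - 2 * qq k * k) + qq k / 2 * (1 + 1/k - 4 * qq k) by
    linarith
  have hq1 := hB.q1
  have hk1 : 1 / (k:ℝ) ≤ 1 := by rw [div_le_one (by linarith)]; linarith
  by_cases hx100 : x ≤ 100
  · have hxl : x - 1 ≤ x * Real.log x := by
      have := Real.one_sub_inv_le_log_of_pos hx0
      have := mul_le_mul_of_nonneg_left this hx0.le
      rw [mul_sub, mul_inv_cancel₀ hx0.ne'] at this; linarith
    have e : d * (Real.log x - 1 - k * (k * d) - 2 * qq k * k) + qq k / 2 * (1 + 1/k - 4 * qq k)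
      = qq k / 2 * (x * Real.log x - x + 1 + 1/k - 4 * qq k - x * (k^2 * (qq k / 2 * x)) - x * (2 * qq k * k)) := by
      rw [hdx]; ring
    rw [e]
    apply mul_pos (by positivity)
    have g1 : x * (k^2 * (qq k / 2 * x)) ≤ 100 * (k^2 * (qq k / 2 * 100)) := by gcongr
    have g2 : x * (2 * qq k * k) ≤ 100 * (2 * qq k * k) := by gcongr
    have g3 : qq k * (20000 * (k:ℝ)^2) ≤ 1 / k := by
      rw [le_div_iff₀ hk']; exact hB.q2
    have g4 : qq k * 1 ≤ qq k * k^2 := by gcongr; nlinarith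
    have g5 : qq k * k ≤ qq k * k^2 := by gcongr; nlinarith
    linarith
  · push Not at hx100
    have hA : 0 < qq k / 2 * (1 + 1/k - 4 * qq k) := by
      apply mul_pos (by positivity); linarith
    have hlx : 3 ≤ Real.log x := by
      rw [Real.le_log_iff_exp_le hx0]
      have h3 : Real.exp 3 = Real.exp 1 ^ 3 := by rw [← Real.exp_nat_mul]; norm_num
      rw [h3]
      have h3 : Real.exp 1 ≤ 3 := by have := Real.exp_one_lt_d9; linarith
      have : Real.exp 1 ^ 3 ≤ 3 ^ 3 := by gcongr
      linarith
    have : 0 ≤ Real.log x - 1 - k * (k * d) - 2 * qq k * k := by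
      by_cases hkk : k * (k * d) ≤ 1
      · linarith
      · push Not at hkk
        have : - (2 * Real.log k) ≤ Real.log d := by
          have : Real.log (k * (k*d)) = 2 * Real.log k + Real.log d := by
            rw [Real.log_mul hk'.ne' (by positivity), Real.log_mul hk'.ne' hd0.ne']; ring
          have h2 := Real.log_pos hkk
          linarith
        have h4 := hB.h4
        have : (k:ℝ) * (k * d) ≤ k * (1/10) := by gcongr
        linarith
    have := mul_nonneg h1 this
    linarith

theorem psi_min (hB : Big k) : ∃ η > 0, ∀ d, 0 ≤ d → d ≤ 3 / (k:ℝ) → η ≤ psi k d := by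
  have hk := hB.kpos
  have hk' : (0:ℝ) < k := by linarith
  have h3k : 3 / (k:ℝ) ≤ 3/100 := by gcongr
  have hcont : ContinuousOn (psi k) (Set.Icc 0 (3 / (k:ℝ))) := by
    unfold psi
    have hF : Continuous (fun d : ℝ => FF k (1 - 2 * d)) := by unfold FF GG; fun_prop
    have hl : ContinuousOn (fun d : ℝ => Real.log (FF k (1 - 2 * d))) (Set.Icc 0 (3 / (k:ℝ))) := by
      apply hF.continuousOn.log
      intro d hd
      have := FF_ge hB (1 - 2 * d) (by rw [abs_le]; constructor <;> linarith [hd.1, hd.2])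
      linarith
    have hn := Real.continuous_negMulLog
    fun_prop
  obtain ⟨d0, hd0, hmin⟩ := isCompact_Icc.exists_isMinOn (Set.nonempty_Icc.mpr (by positivity)) hcont
  refine ⟨psi k d0, ?_, fun d a b => hmin ⟨a, b⟩⟩
  by_cases h : d0 ≤ 1 / (10 * k)
  · exact psi_R2 hB d0 hd0.1 h
  · exact psi_R1 hB d0 (le_of_not_ge h) hd0.2

end
end HC

namespace HC
open Finset
noncomputable section

theorem choose_hoeff (N a : ℕ) (hN : 0 < N) (ha : a ≤ N) (x : ℝ) (hx : x = (2 * (a:ℝ) - N) / N) :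
    (N.choose a : ℝ) ≤ 2 ^ N * Real.exp (- (N * x ^ 2 / 2)) := by
  have hNr : (0:ℝ) < N := by exact_mod_cast hN
  have h1 : (N.choose a : ℝ) * Real.exp (N * x ^ 2) ≤ (2 * Real.cosh x) ^ N := by
    have : 2 * Real.cosh x = Real.exp x + Real.exp (-x) := by rw [Real.cosh_eq]; ring
    rw [this, add_pow]
    have h := Finset.single_le_sum (f := fun i => Real.exp x ^ i * Real.exp (-x) ^ (N - i) * (N.choose i : ℝ))
      (s := range (N+1)) (fun i _ => by positivity) (show a ∈ range (N+1) by simp; omega)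
    refine le_trans (le_of_eq ?_) h
    rw [← Real.exp_nat_mul, ← Real.exp_nat_mul, ← Real.exp_add, mul_comm]
    congr 2
    rw [Nat.cast_sub ha, hx]; field_simp; ring
  have h2 : (2 * Real.cosh x) ^ N ≤ 2 ^ N * Real.exp (N * (x ^ 2 / 2)) := by
    rw [mul_pow, Real.exp_nat_mul]
    have := Real.cosh_le_exp_half_sq x
    have := (Real.cosh_pos x).le
    gcongr
  have h3 : (N.choose a : ℝ) ≤ (2 ^ N * Real.exp (N * (x ^ 2 / 2))) * Real.exp (- (N * x^2)) := by
    have := mul_le_mul_of_nonneg_right (h1.trans h2) (Real.exp_pos (- (N * x^2))).le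
    rwa [mul_assoc, ← Real.exp_add, add_neg_cancel, Real.exp_zero, mul_one] at this
  refine h3.trans (le_of_eq ?_)
  rw [mul_assoc, ← Real.exp_add]; congr 2; ring

theorem choose_ent (N b : ℕ) (hN : 0 < N) (hb : b ≤ N) (d : ℝ) (hd : d = (b:ℝ) / N) :
    (N.choose b : ℝ) ≤ Real.exp (N * (d + Real.negMulLog d)) := by
  have hNr : (0:ℝ) < N := by exact_mod_cast hN
  rcases Nat.eq_zero_or_pos b with h0 | h0
  · subst h0; simp at hd; subst hd; simp
  have hbr : (0:ℝ) < b := by exact_mod_cast h0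
  have hd0 : 0 < d := by rw [hd]; positivity
  have h1 : (N.choose b : ℝ) * d ^ b ≤ Real.exp (N * d) := by
    have h2 : (d + 1) ^ N ≤ Real.exp (N * d) := by
      rw [Real.exp_nat_mul]
      have := Real.add_one_le_exp d
      gcongr
    refine le_trans ?_ h2
    rw [add_pow]
    have h := Finset.single_le_sum (f := fun i => d ^ i * 1 ^ (N - i) * (N.choose i : ℝ))
      (s := range (N+1)) (fun i _ => by positivity) (show b ∈ range (N+1) by simp; omega)
    refine le_trans (le_of_eq ?_) h
    simp; ring
  have h2 : d ^ b = Real.exp (- (N * Real.negMulLog d)) := by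
    unfold Real.negMulLog
    have : - ((N:ℝ) * (- d * Real.log d)) = b * Real.log d := by
      have : (b:ℝ) = N * d := by rw [hd]; field_simp
      rw [this]; ring
    rw [this, Real.exp_nat_mul, Real.exp_log hd0]
  rw [h2] at h1
  have := mul_le_mul_of_nonneg_right h1 (Real.exp_pos (N * Real.negMulLog d)).le
  rw [mul_assoc, ← Real.exp_add, neg_add_cancel, Real.exp_zero, mul_one, ← Real.exp_add] at this
  rwa [mul_add]

theorem hD_bound {k : ℕ} (hB : Big k) (η : ℝ) (hη : ∀ d, 0 ≤ d → d ≤ 3 / (k:ℝ) → η ≤ psi k d)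
    (N : ℕ) (hN : 0 < N) (z : ℝ) (hz : 0 < z) (hzN : z ^ 4 = N) (hηz : z / 4 ≤ η * N)
    (s : ℕ) (hs : (s:ℝ) ≤ c1 k * N) (a : ℕ) (ha : a ≤ N)
    (hr : Real.sqrt ((z⁻¹)^3) < |(2 * (a:ℝ) - N) / N|) :
    (N.choose a : ℝ) * FF k ((2 * (a:ℝ) - N) / N) ^ s ≤ 2 ^ N * Real.exp (- (z/4)) := by
  have hNr : (0:ℝ) < N := by exact_mod_cast hN
  have ha' : (a:ℝ) ≤ N := by exact_mod_cast ha
  have ha0 : (0:ℝ) ≤ a := Nat.cast_nonneg a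
  set x := (2 * (a:ℝ) - N) / N with hx
  have hx1 : |x| ≤ 1 := by
    rw [hx, abs_div, abs_of_pos hNr, div_le_one hNr, abs_le]
    constructor <;> linarith
  have hF := FF_ge hB x hx1
  have hFs : FF k x ^ s ≤ Real.exp (N * (c1 k * Real.log (FF k x))) := by
    have : FF k x ^ s = Real.exp (s * Real.log (FF k x)) := by
      rw [Real.exp_nat_mul, Real.exp_log (by linarith)]
    rw [this]
    apply Real.exp_le_exp.mpr
    have := mul_le_mul_of_nonneg_right hs (Real.log_nonneg hF)
    linarith
  have hx2 : (z⁻¹)^3 ≤ x^2 := by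
    rw [← sq_abs x, ← Real.sq_sqrt (show 0 ≤ (z⁻¹)^3 by positivity)]
    gcongr
  have hx3 : z ≤ N * x ^ 2 := by
    have := mul_le_mul_of_nonneg_left hx2 hNr.le
    have e : (N:ℝ) * (z⁻¹)^3 = z := by rw [← hzN]; field_simp
    linarith
  by_cases hreg : |x| ≤ 1 - 6 / k
  · have h1 := region1 hB x hreg
    have h2 := choose_hoeff N a hN ha x hx
    calc _ ≤ (2 ^ N * Real.exp (- (N * x ^ 2 / 2))) * Real.exp (N * (c1 k * Real.log (FF k x))) := by
          gcongr
      _ = 2 ^ N * Real.exp (- (N * x ^ 2 / 2) + N * (c1 k * Real.log (FF k x))) := by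
          rw [mul_assoc, ← Real.exp_add]
      _ ≤ _ := by
          gcongr
          have := mul_le_mul_of_nonneg_left h1 hNr.le
          linarith
  · push Not at hreg
    have key : ∀ b : ℕ, b ≤ N → N.choose b = N.choose a → (b:ℝ) / N = (1 - |x|) / 2 →
        (N.choose a : ℝ) * FF k x ^ s ≤ 2 ^ N * Real.exp (- (z/4)) := by
      intro b hb hba hd
      set d := (1 - |x|)/2 with hdd
      have hent := choose_ent N b hN hb d hd.symm
      rw [hba] at hent
      have hd3 : d ≤ 3 / k := by
        have : 6 / (k:ℝ) = 2 * (3 / k) := by ring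
        rw [hdd]; linarith
      have hp := hη d (by rw [hdd]; linarith) hd3
      have hFd : FF k (1 - 2 * d) = FF k x := by
        have : 1 - 2 * d = |x| := by rw [hdd]; ring
        rw [this]
        rcases abs_cases x with ⟨h, _⟩ | ⟨h, _⟩ <;> rw [h]
        exact FF_neg k x
      unfold psi at hp
      rw [hFd] at hp
      calc _ ≤ Real.exp (N * (d + Real.negMulLog d)) * Real.exp (N * (c1 k * Real.log (FF k x))) := by
            gcongr
        _ = Real.exp (N * (d + Real.negMulLog d) + N * (c1 k * Real.log (FF k x))) := by
            rw [← Real.exp_add]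
        _ ≤ Real.exp (N * Real.log 2 + - (z/4)) := by
            apply Real.exp_le_exp.mpr
            have := mul_le_mul_of_nonneg_left hp hNr.le
            linarith
        _ = _ := by
            rw [Real.exp_add, Real.exp_nat_mul, Real.exp_log (by norm_num)]
    rcases abs_cases x with ⟨h, _⟩ | ⟨h, _⟩
    · apply key (N - a) (by omega) (Nat.choose_symm ha)
      rw [h, hx, Nat.cast_sub ha]; field_simp; ring
    · apply key a ha rfl
      rw [h, hx]; field_simp; ring

def epsz (c z : ℝ) : ℝ := c * z^4 * ((z^4+1)^2 * Real.exp (-(z/8)) +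
  Real.exp (-(z/128)) * Real.exp (10 * c * z^4 * Real.exp (-(3*z/32))) + 3 * ((z⁻¹)^3 + Real.exp (-(3*z/32)))^2)

theorem epsz_tendsto (c : ℝ) : Filter.Tendsto (epsz c) Filter.atTop (nhds 0) := by
  have key : ∀ (n : ℕ) (b : ℝ), 0 < b → Filter.Tendsto (fun z : ℝ => z ^ n * Real.exp (-(b * z))) Filter.atTop (nhds 0) := by
    intro n b hb
    have := tendsto_rpow_mul_exp_neg_mul_atTop_nhds_zero (n:ℝ) b hb
    simpa using this
  have hinv : Filter.Tendsto (fun z : ℝ => z⁻¹) Filter.atTop (nhds 0) := tendsto_inv_atTop_zero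
  have t1 : Filter.Tendsto (fun z : ℝ => c * z^4 * ((z^4+1)^2 * Real.exp (-(z/8)))) Filter.atTop (nhds 0) := by
    have := ((((key 12 (1/8) (by norm_num)).add ((key 8 (1/8) (by norm_num)).const_mul 2)).add (key 4 (1/8) (by norm_num)))).const_mul c
    simp only [mul_zero, add_zero] at this
    refine this.congr (fun z => ?_)
    have : z/8 = 1/8 * z := by ring
    rw [this]; ring
  have t2 : Filter.Tendsto (fun z : ℝ => c * z^4 * (Real.exp (-(z/128)) * Real.exp (10 * c * z^4 * Real.exp (-(3*z/32))))) Filter.atTop (nhds 0) := by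
    have e := (Real.continuous_exp.tendsto _).comp ((key 4 (3/32) (by norm_num)).const_mul (10 * c))
    have := ((key 4 (1/128) (by norm_num)).const_mul c).mul e
    simp only [mul_zero, zero_mul] at this
    refine this.congr (fun z => ?_)
    have e1 : z/128 = 1/128 * z := by ring
    have e2 : 3*z/32 = 3/32 * z := by ring
    simp only [Function.comp]
    rw [e1, e2]; ring_nf
  have t3 : Filter.Tendsto (fun z : ℝ => c * z^4 * (3 * ((z⁻¹)^3 + Real.exp (-(3*z/32)))^2)) Filter.atTop (nhds 0) := by
    have := ((hinv.add (key 2 (3/32) (by norm_num))).pow 2).const_mul (3 * c)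
    simp only [mul_zero, add_zero, ne_eq, OfNat.ofNat_ne_zero, not_false_eq_true, zero_pow] at this
    refine this.congr' ?_
    filter_upwards [Filter.eventually_gt_atTop 0] with z hz
    have e2 : 3*z/32 = 3/32 * z := by ring
    rw [e2]
    have : z⁻¹ + z ^ 2 * Real.exp (-(3/32*z)) = z^2 * ((z⁻¹)^3 + Real.exp (-(3/32*z))) := by
      field_simp
    rw [this]; ring
  have := (t1.add t2).add t3
  simp only [add_zero] at this
  refine this.congr (fun z => ?_)
  unfold epsz; ring

open Classical in
theorem prob_bound {k : ℕ} (hB : Big k) (c : ℝ) (hc0 : 0 < c) (hc : c < c1 k) :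
    ∃ ε : ℕ → ℝ, Filter.Tendsto ε Filter.atTop (nhds 0) ∧ ∀ᶠ P : ℕ in Filter.atTop, ∀ m : ℕ,
      (m:ℝ) ≤ c * (2 * P : ℕ) →
      Ex m (fun h : Fin m → (Fin k → Fin (2 * P)) => if sol okc (Bal (2 * P)) h = ∅ then (1:ℝ) else 0) ≤ ε P := by
  obtain ⟨η, hη0, hη⟩ := psi_min hB
  have hk := hB.kpos
  have hk' : (0:ℝ) < k := by linarith
  have hq := hB.q0
  have hq0 := qq_pos k
  set Z : ℕ → ℝ := fun P => ((2 * P : ℕ) : ℝ) ^ (1/4 : ℝ) with hZ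
  have hZt : Filter.Tendsto Z Filter.atTop Filter.atTop := by
    have h1 : Filter.Tendsto (fun x : ℝ => x ^ (1/4:ℝ)) Filter.atTop Filter.atTop := tendsto_rpow_atTop (by norm_num)
    have h2 : Filter.Tendsto (fun P : ℕ => ((2 * P : ℕ):ℝ)) Filter.atTop Filter.atTop :=
      tendsto_natCast_atTop_atTop.comp (Filter.tendsto_id.const_mul_atTop' (by norm_num))
    exact h1.comp h2
  refine ⟨fun P => epsz c (Z P), (epsz_tendsto c).comp hZt, ?_⟩
  filter_upwards [Filter.eventually_gt_atTop 0, hZt.eventually (Filter.eventually_ge_atTop (k:ℝ)),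
    hZt.eventually (Filter.eventually_ge_atTop (1:ℝ)), hZt.eventually (Filter.eventually_ge_atTop (1/η))] with P hP z1 z2 z3 m hm
  have hzN : Z P ^ 4 = ((2 * P : ℕ) : ℝ) := by
    simp only [hZ]
    rw [← Real.rpow_natCast, ← Real.rpow_mul (by positivity)]; norm_num
  set z := Z P
  have hz : 0 < z := by linarith
  set N := 2 * P with hN
  have hNr : (0:ℝ) < N := by exact_mod_cast (show 0 < N by omega)
  obtain ⟨k', rfl⟩ : ∃ k', k = k' + 4 := ⟨k - 4, by have := hB.h1; omega⟩
  set r := Real.sqrt ((z⁻¹)^3) with hr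
  have hr2 : r ^ 2 = (z⁻¹)^3 := Real.sq_sqrt (by positivity)
  have hrk : r ≤ 1 / ((k'+4 : ℕ) : ℝ) := by
    apply abs_le_of_sq_le_sq' _ (by positivity) |>.2
    rw [hr2, div_pow, one_pow, inv_pow, ← one_div]
    apply one_div_le_one_div_of_le (by positivity)
    have : z^2 ≤ z^3 := pow_le_pow_right₀ z2 (by norm_num)
    refine le_trans ?_ this
    gcongr
  have hηz : z / 4 ≤ η * N := by
    rw [← hzN]
    have h1 : 1 ≤ η * z := by rw [div_le_iff₀ hη0] at z3; linarith
    have h2 : z ≤ z^3 := by nlinarith [pow_le_pow_right₀ z2 (show 1 ≤ 3 by norm_num)]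
    have : 1 * z ≤ (η * z) * z^3 := by gcongr
    have e : η * z^4 = (η * z) * z^3 := by ring
    linarith
  have hmain := conc_main (N := N) (k := k') P hP hN (by linarith) r (4 * ((k'+4 : ℕ):ℝ)^2 * qq (k'+4)^2 * r^2)
    (Real.exp (-(z/4))) (Real.exp (-(z/8))) (Real.exp (-(z/64))) (Real.sqrt_nonneg _) (by positivity)
    (Real.exp_pos _).le (Real.exp_pos _) (Real.exp_pos _)
    (fun x hx => by have := FF_ge hB x hx; linarith)
    (fun x hx => FF_small hB x r hrk hx) (fun x hx => FF_le hB x hx) m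
    (fun s hs a ha hra => hD_bound hB η hη N (by omega) z hz hzN hηz s (by
      have : (s:ℝ) ≤ m := by exact_mod_cast hs.le
      have : c * N ≤ c1 (k'+4) * N := by gcongr
      linarith) a ha hra)
  have hθ : Real.exp (-(z/8)) / Real.exp (-(z/64))^2 = Real.exp (-(3*z/32)) := by
    rw [← Real.exp_nat_mul, ← Real.exp_sub]; congr 1; push_cast; ring
  have hDτ : ((N:ℝ)+1)^2 * Real.exp (-(z/4)) / Real.exp (-(z/8)) = ((N:ℝ)+1)^2 * Real.exp (-(z/8)) := by
    rw [mul_div_assoc, ← Real.exp_sub]; congr 2; ring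
  rw [hθ, hDτ, hr2] at hmain
  refine le_trans (le_of_eq ?_) (hmain.trans ?_)
  · rfl
  unfold epsz
  rw [hzN]
  set θ := Real.exp (-(3*z/32)) with hθd
  set K : ℝ := ((k'+4 : ℕ):ℝ)
  set q := qq (k'+4)
  have hV : Real.exp (-(z/64)) * (1 + 10 * (4 * K^2 * q^2 * (z⁻¹)^3 + θ)) ^ m ≤
      Real.exp (-(z/128)) * Real.exp (10 * c * N * θ) := by
    have hθ0 : 0 < θ := Real.exp_pos _
    set V := 4 * K^2 * q^2 * (z⁻¹)^3 with hVd
    have hV0 : 0 ≤ V := by positivity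
    have a1 : (1 + 10 * (V + θ)) ^ m ≤ Real.exp (m * (10 * (V + θ))) := by
      rw [Real.exp_nat_mul]
      have := Real.add_one_le_exp (10 * (V + θ))
      gcongr; linarith
    have a2 : (m:ℝ) * (10 * (V + θ)) ≤ (c * N) * (10 * (V + θ)) := by gcongr
    have a3 : (c * N) * (10 * V) ≤ z / 128 := by
      have hcq : c * q ≤ 1 := by
        have := (c1_pos hB).2
        have : c * q ≤ c1 (k'+4) * q := by gcongr
        linarith
      have hKq : 40 * (K^2 * q) ≤ 1/128 := by
        have := hB.q2
        have h2 : 0 ≤ q * K^2 := by positivity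
        have h3 : q * (20000 * K^2) * 1 ≤ q * (20000 * K^2) * K := by gcongr; linarith
        have h4 : q * (20000 * K^2) * K ≤ 1 := this
        linarith
      have e : (c * N) * (10 * V) = (c * q) * (40 * (K^2 * q)) * z := by
        rw [hVd, ← hzN]; field_simp; ring
      rw [e]
      calc (c * q) * (40 * (K^2 * q)) * z ≤ 1 * (1/128) * z := by gcongr
        _ = z/128 := by ring
    calc _ ≤ Real.exp (-(z/64)) * Real.exp (m * (10 * (V + θ))) := by gcongr
      _ = Real.exp (-(z/64) + m * (10 * (V + θ))) := by rw [Real.exp_add]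
      _ ≤ Real.exp (-(z/128) + 10 * c * N * θ) := by
          apply Real.exp_le_exp.mpr; linarith
      _ = _ := by rw [Real.exp_add]
  have hm0 : (0:ℝ) ≤ m := Nat.cast_nonneg m
  have hθ0 : 0 < θ := Real.exp_pos _
  apply mul_le_mul hm _ (by positivity) (by positivity)
  linarith

end
end HC

namespace HC
open Finset
noncomputable section
open Classical

theorem enum_count {V : Type} [Fintype V] [DecidableEq V] (k : ℕ) (e : Finset V) (he : e.card = k) :
    k.factorial ≤ (univ.filter (fun g : Fin k → V => univ.image g = e)).card := by
  have h1 : (univ : Finset (Equiv.Perm (Fin k))).card = k.factorial := by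
    rw [Finset.card_univ, Fintype.card_perm, Fintype.card_fin]
  rw [← h1]
  let f := (e.equivFinOfCardEq he).symm
  apply Finset.card_le_card_of_injOn (fun (π : Equiv.Perm (Fin k)) i => ((f (π i) : e) : V))
  · intro π _
    rw [Finset.mem_coe, Finset.mem_filter]
    refine ⟨Finset.mem_univ _, ?_⟩
    ext v
    simp only [Finset.mem_image, Finset.mem_univ, true_and]
    constructor
    · rintro ⟨i, rfl⟩; exact (f (π i)).2
    · intro hv
      exact ⟨π.symm (f.symm ⟨v, hv⟩), by simp⟩
  · intro π _ π' _ h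
    ext i
    have := congrFun h i
    simp only at this
    have := f.injective (Subtype.ext this)
    rw [this]

theorem enum_count2 {V : Type} [Fintype V] [DecidableEq V] (k m : ℕ) (H : Finset (Finset V)) (hH : H.card = m)
    (hu : ∀ e ∈ H, e.card = k) :
    m.factorial * k.factorial ^ m ≤
      (univ.filter (fun h : Fin m → Fin k → V => univ.image (fun i => univ.image (h i)) = H)).card := by
  set S := univ.filter (fun h : Fin m → Fin k → V => univ.image (fun i => univ.image (h i)) = H) with hS
  set T := univ.filter (fun f : Fin m → Finset V => univ.image f = H) with hT
  have hmap : ∀ h ∈ S, (fun i => univ.image (h i)) ∈ T := by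
    intro h hh
    rw [hS, Finset.mem_filter] at hh
    rw [hT, Finset.mem_filter]
    exact ⟨Finset.mem_univ _, hh.2⟩
  rw [Finset.card_eq_sum_card_fiberwise hmap]
  calc m.factorial * k.factorial ^ m ≤ T.card * k.factorial ^ m :=
        Nat.mul_le_mul_right _ (by
          have := enum_count m H hH
          rw [hT]; convert this)
    _ = ∑ f ∈ T, k.factorial ^ m := by rw [Finset.sum_const, smul_eq_mul]
    _ ≤ _ := by
      apply Finset.sum_le_sum
      intro f hf
      rw [hT, Finset.mem_filter] at hf
      have hsub : Fintype.piFinset (fun i => univ.filter (fun g : Fin k → V => univ.image g = f i)) ⊆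
          S.filter (fun h => (fun i => univ.image (h i)) = f) := by
        intro h hh
        rw [Fintype.mem_piFinset] at hh
        have : (fun i => univ.image (h i)) = f := by
          funext i
          exact (Finset.mem_filter.mp (hh i)).2
        rw [Finset.mem_filter, hS, Finset.mem_filter, this]
        exact ⟨⟨Finset.mem_univ _, hf.2⟩, rfl⟩
      refine le_trans ?_ (Finset.card_le_card hsub)
      rw [Fintype.card_piFinset]
      calc k.factorial ^ m = ∏ i : Fin m, k.factorial := by simp
        _ ≤ _ := by
          apply Finset.prod_le_prod' 
          intro i _
          apply enum_count
          apply hu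
          rw [← hf.2]
          exact Finset.mem_image_of_mem f (Finset.mem_univ i)

def BadS (n k m : ℕ) : Finset (Finset (Finset (Fin n))) :=
  univ.filter (fun H => H.card = m ∧ (∀ e ∈ H, e.card = k) ∧ ¬ IsTwoColorable H)

theorem bad_le (n k m N : ℕ) (hn : n ≤ N) (hN : 0 < N) :
    ((BadS n k m).card : ℝ) * (m.factorial * k.factorial ^ m : ℕ) ≤
      Ex m (fun h : Fin m → (Fin k → Fin N) => if sol okc (Bal N) h = ∅ then (1:ℝ) else 0) * ((N:ℝ) ^ k) ^ m := by
  have hEx : Ex m (fun h : Fin m → (Fin k → Fin N) => if sol okc (Bal N) h = ∅ then (1:ℝ) else 0) * ((N:ℝ) ^ k) ^ m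
      = ((univ.filter (fun h : Fin m → (Fin k → Fin N) => sol okc (Bal N) h = ∅)).card : ℝ) := by
    unfold Ex
    rw [Finset.card_filter]
    push_cast
    have hNr : (N:ℝ) ≠ 0 := by exact_mod_cast hN.ne'
    simp only [Fintype.card_fun, Fintype.card_fin, Nat.cast_pow]
    field_simp
  rw [hEx]
  have h1 : (BadS n k m).card * (m.factorial * k.factorial ^ m) ≤
      (univ.filter (fun h : Fin m → Fin k → Fin n => univ.image (fun i => univ.image (h i)) ∈ BadS n k m)).card := by
    set W := univ.filter (fun h : Fin m → Fin k → Fin n => univ.image (fun i => univ.image (h i)) ∈ BadS n k m) with hW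
    have hmap : ∀ h ∈ W, (fun h : Fin m → Fin k → Fin n => univ.image (fun i => univ.image (h i))) h ∈ BadS n k m :=
      fun h hh => (Finset.mem_filter.mp hh).2
    rw [Finset.card_eq_sum_card_fiberwise hmap, ← smul_eq_mul, ← Finset.sum_const]
    apply Finset.sum_le_sum
    intro H hH
    have hH2 := (Finset.mem_filter.mp hH).2
    refine (enum_count2 k m H hH2.1 hH2.2.1).trans (Finset.card_le_card ?_)
    intro h hh
    have := (Finset.mem_filter.mp hh).2
    rw [Finset.mem_filter, Finset.mem_filter]
    exact ⟨⟨Finset.mem_univ _, by rw [this]; exact hH⟩, this⟩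
  have h2 : (univ.filter (fun h : Fin m → Fin k → Fin n => univ.image (fun i => univ.image (h i)) ∈ BadS n k m)).card ≤
      (univ.filter (fun h : Fin m → (Fin k → Fin N) => sol okc (Bal N) h = ∅)).card := by
    apply Finset.card_le_card_of_injOn (fun h i j => Fin.castLE hn (h i j))
    · intro h hh
      have hb := (Finset.mem_filter.mp hh).2
      have hb2 := (Finset.mem_filter.mp hb).2.2.2
      rw [Finset.mem_coe, Finset.mem_filter]
      refine ⟨Finset.mem_univ _, ?_⟩
      by_contra hne
      obtain ⟨σ, hσ⟩ := Finset.nonempty_iff_ne_empty.mpr hne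
      have hs := (Finset.mem_filter.mp hσ).2
      apply hb2
      refine ⟨fun v => σ (Fin.castLE hn v), ?_⟩
      intro e he
      obtain ⟨i, _, rfl⟩ := Finset.mem_image.mp he
      obtain ⟨⟨a, ha⟩, ⟨b, hb⟩⟩ := hs i
      exact ⟨⟨h i a, Finset.mem_image_of_mem _ (Finset.mem_univ _), ha⟩,
        ⟨h i b, Finset.mem_image_of_mem _ (Finset.mem_univ _), hb⟩⟩
    · intro h _ h' _ hh
      funext i j
      have := congrFun (congrFun hh i) j
      exact Fin.castLE_injective hn this
  exact_mod_cast h1.trans h2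

theorem good_add_bad (n k m : ℕ) :
    Nat.card {H : Finset (Finset (Fin n)) // H.card = m ∧ (∀ e ∈ H, e.card = k) ∧ IsTwoColorable H}
      + (BadS n k m).card = (n.choose k).choose m := by
  have h : (powersetCard m (powersetCard k (univ : Finset (Fin n)))).card = (n.choose k).choose m := by
    simp
  have hs : powersetCard m (powersetCard k (univ : Finset (Fin n))) =
      univ.filter (fun H => H.card = m ∧ (∀ e ∈ H, e.card = k)) := by
    ext H
    simp only [Finset.mem_powersetCard, Finset.mem_filter, Finset.mem_univ, true_and, Finset.subset_iff]
    constructor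
    · rintro ⟨a, b⟩; exact ⟨b, fun e he => (a he).2⟩
    · rintro ⟨a, b⟩; exact ⟨fun e he => ⟨fun _ _ => trivial, b e he⟩, a⟩
  rw [Nat.card_eq_fintype_card, Fintype.card_subtype, ← h, hs,
    ← Finset.card_filter_add_card_filter_not (s := univ.filter (fun H : Finset (Finset (Fin n)) => H.card = m ∧ (∀ e ∈ H, e.card = k))) (fun H => IsTwoColorable H)]
  rw [Finset.filter_filter, Finset.filter_filter]
  unfold BadS
  simp only [and_assoc]

theorem total_ge (k : ℕ) (hk : 2 ≤ k) (c : ℝ) (hc : 0 < c) : ∃ κ > 0, ∀ᶠ n : ℕ in Filter.atTop, ∀ N m : ℕ,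
    n ≤ N → N ≤ n + 1 → (m:ℝ) ≤ c * N →
    κ * ((N:ℝ)^k)^m ≤ (((n.choose k).choose m : ℕ) : ℝ) * (m.factorial * k.factorial ^ m : ℕ) := by
  set K : ℝ := (k:ℝ)^2 + k.factorial * c with hK
  have hK0 : 0 < K := by positivity
  refine ⟨Real.exp (-(2 * K * c)), Real.exp_pos _, ?_⟩
  have hev : ∀ᶠ n : ℕ in Filter.atTop, 2 * K ≤ (n:ℝ) :=
    tendsto_natCast_atTop_atTop.eventually (Filter.eventually_ge_atTop _)
  filter_upwards [hev, Filter.eventually_gt_atTop (k+1)] with n hn hnk N m h1 h2 hm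
  have hnN : (n:ℝ) ≤ N := by exact_mod_cast h1
  have hN0 : (0:ℝ) < N := by linarith
  have hx : K / N ≤ 1/2 := by rw [div_le_iff₀ hN0]; linarith
  have hx0 : 0 ≤ K / N := by positivity
  set M := n.choose k with hM
  -- base bound
  have hbase : (N:ℝ)^k * (1 - K / N) ≤ (k.factorial : ℝ) * M - k.factorial * m := by
    have a1 : ((N:ℝ) - k)^k ≤ (k.factorial : ℝ) * M := by
      have e1 := Nat.pow_sub_le_descFactorial n k
      rw [Nat.descFactorial_eq_factorial_mul_choose] at e1
      have e2 : ((n + 1 - k : ℕ) : ℝ)^k ≤ (k.factorial : ℝ) * M := by exact_mod_cast e1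
      refine le_trans ?_ e2
      have hkN : (k:ℝ) ≤ N := by exact_mod_cast (show k ≤ N by omega)
      have hN1 : (N:ℝ) ≤ n + 1 := by exact_mod_cast h2
      rw [Nat.cast_sub (by omega)]
      push_cast
      exact pow_le_pow_left₀ (by linarith) (by linarith) k
    have a2 : (N:ℝ)^k * (1 - (k:ℝ)^2/N) ≤ ((N:ℝ) - k)^k := by
      have e : (N:ℝ) - k = N * (1 + -((k:ℝ)/N)) := by field_simp; ring
      rw [e, mul_pow]
      have hkN : (k:ℝ)/N ≤ 1 := by rw [div_le_one hN0]; exact_mod_cast (show k ≤ N by omega)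
      have := one_add_mul_le_pow (show (-2:ℝ) ≤ -((k:ℝ)/N) by linarith) k
      have e2 : 1 - (k:ℝ)^2/N = 1 + k * -((k:ℝ)/N) := by ring
      rw [e2]
      gcongr
    have a3 : (k.factorial:ℝ) * m ≤ (N:ℝ)^k * (k.factorial * c / N) := by
      have hN1 : (1:ℝ) ≤ N := by exact_mod_cast (show 1 ≤ N by omega)
      have : (N:ℝ)^2 ≤ N^k := pow_le_pow_right₀ hN1 hk
      calc (k.factorial:ℝ) * m ≤ k.factorial * (c * N) := by gcongr
        _ = (N:ℝ)^2 * (k.factorial * c / N) := by field_simp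
        _ ≤ _ := by gcongr
    have e : (N:ℝ)^k * (1 - K/N) = (N:ℝ)^k * (1 - (k:ℝ)^2/N) - (N:ℝ)^k * (k.factorial * c / N) := by
      rw [hK]; field_simp; ring
    rw [e]; linarith
  have hb0 : 0 ≤ (N:ℝ)^k * (1 - K / N) := by
    apply mul_nonneg (by positivity); linarith
  have hfac : (0:ℝ) < k.factorial := by exact_mod_cast Nat.factorial_pos k
  have hMm : m ≤ M := by
    have : (0:ℝ) ≤ (k.factorial:ℝ) * ((M:ℝ) - m) := by rw [mul_sub]; linarith
    have := nonneg_of_mul_nonneg_right this hfac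
    have : (m:ℝ) ≤ M := by linarith
    exact_mod_cast this
  have hdesc : (((M:ℝ) - m))^m ≤ ((M.choose m : ℕ):ℝ) * m.factorial := by
    have e1 := Nat.pow_sub_le_descFactorial M m
    rw [Nat.descFactorial_eq_factorial_mul_choose] at e1
    have e2 : ((M + 1 - m : ℕ) : ℝ)^m ≤ (m.factorial : ℝ) * (M.choose m : ℕ) := by exact_mod_cast e1
    rw [mul_comm] at e2
    refine le_trans ?_ e2
    rw [Nat.cast_sub (by omega)]
    push_cast
    have : (m:ℝ) ≤ M := by exact_mod_cast hMm
    exact pow_le_pow_left₀ (by linarith) (by linarith) m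
  have hexp : Real.exp (-(2*K*c)) ≤ (1 - K/N)^m := by
    have b1 : Real.exp (-(2 * (K/N))) ≤ 1 - K/N := by
      rw [Real.exp_neg, inv_le_comm₀ (Real.exp_pos _) (by linarith)]
      have := Real.add_one_le_exp (2 * (K/N))
      refine le_trans ?_ this
      rw [inv_le_iff_one_le_mul₀ (by linarith)]
      nlinarith
    calc Real.exp (-(2*K*c)) ≤ Real.exp (m * (-(2 * (K/N)))) := by
          apply Real.exp_le_exp.mpr
          have : (m:ℝ) * (2 * (K/N)) ≤ (c * N) * (2 * (K/N)) := by gcongr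
          have e : (c * N) * (2 * (K/N)) = 2*K*c := by field_simp
          linarith
      _ = Real.exp (-(2 * (K/N))) ^ m := by rw [Real.exp_nat_mul]
      _ ≤ _ := by gcongr
  calc Real.exp (-(2*K*c)) * ((N:ℝ)^k)^m ≤ (1 - K/N)^m * ((N:ℝ)^k)^m := by gcongr
    _ = ((N:ℝ)^k * (1 - K/N))^m := by rw [mul_pow]; ring
    _ ≤ ((k.factorial : ℝ) * M - k.factorial * m)^m := by gcongr
    _ = (k.factorial:ℝ)^m * ((M:ℝ) - m)^m := by rw [← mul_sub, mul_pow]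
    _ ≤ (k.factorial:ℝ)^m * (((M.choose m : ℕ):ℝ) * m.factorial) := by gcongr
    _ = _ := by push_cast; ring

theorem main_k {k : ℕ} (hB : Big k) (c : ℝ) (hc0 : 0 < c) (hc : c < c1 k) :
    Filter.Tendsto
          (fun n : ℕ =>
            (Nat.card {H : Finset (Finset (Fin n)) //
                H.card = ⌊c * (n : ℝ)⌋₊ ∧ (∀ e ∈ H, e.card = k) ∧ IsTwoColorable H} : ℝ) /
              (Nat.choose (Nat.choose n k) ⌊c * (n : ℝ)⌋₊ : ℝ))
          Filter.atTop (nhds 1) := by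
  obtain ⟨ε, hε, hP⟩ := prob_bound hB c hc0 hc
  obtain ⟨κ, hκ, htot⟩ := total_ge k (by have := hB.h1; omega) c hc0
  have hhalf : Filter.Tendsto (fun n : ℕ => (n+1)/2) Filter.atTop Filter.atTop := by
    apply Filter.tendsto_atTop_atTop.mpr
    intro b; exact ⟨2 * b, fun a ha => by omega⟩
  have hlow : Filter.Tendsto (fun n : ℕ => 1 - ε ((n+1)/2) / κ) Filter.atTop (nhds 1) := by
    have := ((hε.comp hhalf).div_const κ).const_sub 1
    simpa using this
  have hev : ∀ᶠ n : ℕ in Filter.atTop, 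
      1 - ε ((n+1)/2) / κ ≤ (Nat.card {H : Finset (Finset (Fin n)) //
                H.card = ⌊c * (n : ℝ)⌋₊ ∧ (∀ e ∈ H, e.card = k) ∧ IsTwoColorable H} : ℝ) /
              (Nat.choose (Nat.choose n k) ⌊c * (n : ℝ)⌋₊ : ℝ) ∧
      (Nat.card {H : Finset (Finset (Fin n)) //
                H.card = ⌊c * (n : ℝ)⌋₊ ∧ (∀ e ∈ H, e.card = k) ∧ IsTwoColorable H} : ℝ) /
              (Nat.choose (Nat.choose n k) ⌊c * (n : ℝ)⌋₊ : ℝ) ≤ 1 := by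
    filter_upwards [hhalf.eventually hP, htot, Filter.eventually_gt_atTop 0] with n hp ht hn
    set m := ⌊c * (n:ℝ)⌋₊ with hm
    set N := 2 * ((n+1)/2) with hN
    have hnN : n ≤ N := by omega
    have hNn : N ≤ n + 1 := by omega
    have hmN : (m:ℝ) ≤ c * N := by
      have h1 : (m:ℝ) ≤ c * n := Nat.floor_le (by positivity)
      have : (n:ℝ) ≤ N := by exact_mod_cast hnN
      have : c * n ≤ c * N := by gcongr
      linarith
    have e1 := hp m hmN
    have e2 := ht N m hnN hNn hmN
    have e3 := bad_le n k m N hnN (by omega)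
    have e4 := good_add_bad n k m
    set T := (n.choose k).choose m
    set G := Nat.card {H : Finset (Finset (Fin n)) // H.card = m ∧ (∀ e ∈ H, e.card = k) ∧ IsTwoColorable H}
    set b := (BadS n k m).card
    have e4r : (G:ℝ) + b = T := by exact_mod_cast e4
    have hfac : (0:ℝ) < (m.factorial * k.factorial ^ m : ℕ) := by
      exact_mod_cast Nat.mul_pos (Nat.factorial_pos m) (pow_pos (Nat.factorial_pos k) m)
    set f : ℝ := ((m.factorial * k.factorial ^ m : ℕ) : ℝ)
    have hNr : (0:ℝ) < N := by exact_mod_cast (show 0 < N by omega)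
    have hNk : (0:ℝ) < ((N:ℝ)^k)^m := by positivity
    have hT : (0:ℝ) < T := by
      have : 0 < (T:ℝ) * f := lt_of_lt_of_le (by positivity) e2
      exact pos_of_mul_pos_left this hfac.le
    have hb0 : (0:ℝ) ≤ b := Nat.cast_nonneg b
    have hbT : (b:ℝ) * κ ≤ ε ((n+1)/2) * T := by
      have e5 : (b:ℝ) * f ≤ ε ((n+1)/2) * ((N:ℝ)^k)^m := by
        refine e3.trans ?_
        apply mul_le_mul_of_nonneg_right _ hNk.le
        convert e1
      have hε0 : 0 ≤ ε ((n+1)/2) := by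
        have : 0 ≤ ε ((n+1)/2) * ((N:ℝ)^k)^m := le_trans (by positivity) e5
        exact nonneg_of_mul_nonneg_left this hNk
      have e6 : (b:ℝ) * κ * f ≤ ε ((n+1)/2) * T * f := by
        have a := mul_le_mul_of_nonneg_right e5 hκ.le
        have a2 := mul_le_mul_of_nonneg_left e2 hε0
        linarith
      exact le_of_mul_le_mul_right e6 hfac
    constructor
    · rw [le_div_iff₀ hT, sub_mul, one_mul]
      have : (b:ℝ) ≤ ε ((n+1)/2) / κ * T := by
        rw [div_mul_eq_mul_div, le_div_iff₀ hκ]; exact hbT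
      linarith
    · rw [div_le_one hT]; linarith
  exact tendsto_of_tendsto_of_tendsto_of_le_of_le' hlow tendsto_const_nhds
    (hev.mono fun n h => h.1) (hev.mono fun n h => h.2)

end
end HC

/-- There is a sequence `t k → 0` such that for all `k ≥ 3` and
`0 < c < 2^(k-1) ln 2 - (ln 2)/2 - (1 + t k)/2`, the probability that a uniformly
random `k`-uniform hypergraph with `⌊cn⌋` hyperedges is 2-colorable tends to `1`. -/
theorem hypergraph_colorable_whp :
    ∃ t : ℕ → ℝ, Filter.Tendsto t Filter.atTop (nhds 0) ∧
      ∀ k : ℕ, 3 ≤ k → ∀ c : ℝ, 0 < c →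
        c < 2 ^ (k - 1) * Real.log 2 - Real.log 2 / 2 - (1 + t k) / 2 →
        Filter.Tendsto
          (fun n : ℕ =>
            (Nat.card {H : Finset (Finset (Fin n)) //
                H.card = ⌊c * (n : ℝ)⌋₊ ∧ (∀ e ∈ H, e.card = k) ∧ IsTwoColorable H} : ℝ) /
              (Nat.choose (Nat.choose n k) ⌊c * (n : ℝ)⌋₊ : ℝ))
          Filter.atTop (nhds 1) := by
  obtain ⟨k0, hk0⟩ := Filter.eventually_atTop.mp HC.eventually_Big
  refine ⟨fun k => if k0 ≤ k then 1 / (k:ℝ) else 2 * 2 ^ k, ?_, ?_⟩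
  · refine (tendsto_one_div_atTop_nhds_zero_nat (𝕜 := ℝ)).congr' ?_
    filter_upwards [Filter.eventually_ge_atTop k0] with k hk
    rw [if_pos hk]
  · intro k hk3 c hc0 hc
    have hpow : (2:ℝ)^k = 2 * 2^(k-1) := by
      rw [← pow_succ']; congr 1; omega
    by_cases hk : k0 ≤ k
    · simp only [if_pos hk] at hc
      apply HC.main_k (hk0 k hk) c hc0
      have : Real.log 2 / HC.qq k = 2 ^ (k-1) * Real.log 2 := by
        unfold HC.qq
        rw [div_pow, one_pow, hpow]; field_simp
      unfold HC.c1
      rw [this]; exact hc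
    · exfalso
      simp only [if_neg hk] at hc
      have l1 := Real.log_two_gt_d9
      have l2 := Real.log_two_lt_d9
      rw [hpow] at hc
      have : (0:ℝ) < 2^(k-1) := by positivity
      nlinarith
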